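/- Let r, n₁, n₂ be positive integers and let f = (f₁,f₂) ∈ 𝒪(ℂ²,0,0) be given by f₁(x₁,x₂) = x₁^{n₁}[x₁^{rn₁}·O(1) + x₂^{n₂}·O(1)] and f₂(x₁,x₂) = x₂^{n₂}[x₁^{n₁}·O(1) + x₂^{rn₂}·O(1)]. If 0 is an isolated zero of f, then π_f(0) ≥ 2n₁n₂ + 2rn₁n₂. -/

import Mathlib

open Metric Set Filter Topology Polynomial Asymptotics
open scoped Classical

noncomputable section

namespace ZhangPaper

/-- `ℂⁿ`. -/
abbrev Cn (n : ℕ) := Fin n → ℂ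

variable {n : ℕ}

/-- A germ in `𝒪(ℂⁿ,0,0)`: holomorphic near `0` and fixing the origin. -/
def IsGerm (f : Cn n → Cn n) : Prop := AnalyticAt ℂ f 0 ∧ f 0 = 0

/-- `q` is a regular value of `h` on `s`. -/
def IsRegularValueOn (h : Cn n → Cn n) (s : Set (Cn n)) (q : Cn n) : Prop :=
  ∀ x ∈ s, h x = q → Function.Bijective (fderiv ℂ h x)

/-- `m` is the zero order (multiplicity) of `h` at the isolated zero `p`:
the number of solutions of `h x = q` near `p`, for any regular value `q`
with `‖q‖` sufficiently small. -/
def HasZeroOrder (h : Cn n → Cn n) (p : Cn n) (m : ℕ) : Prop :=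
  ∃ r > 0, AnalyticOnNhd ℂ h (closedBall p r) ∧ h p = 0 ∧
    (∀ x ∈ closedBall p r, h x = 0 → x = p) ∧
    (∀ ε > 0, ∃ q : Cn n, ‖q‖ < ε ∧ IsRegularValueOn h (ball p r) q) ∧
    ∃ δ > 0, ∀ q : Cn n, ‖q‖ < δ → IsRegularValueOn h (ball p r) q →
      {x ∈ ball p r | h x = q}.ncard = m

/-- The zero order `π_h(p)` of `h` at `p`. -/
def zeroOrder (h : Cn n → Cn n) (p : Cn n) : ℕ := sInf {m | HasZeroOrder h p m}

/-- The fixed point index `μ_g(p)` of `g` at `p`. -/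
def fixedPointIndex (g : Cn n → Cn n) (p : Cn n) : ℕ :=
  zeroOrder (fun x => x - g x) p

/-- The local Dold index `P_M(f,0)`. -/
def doldIndex (f : Cn n → Cn n) (M : ℕ) : ℤ :=
  ∑ τ ∈ M.primeFactors.powerset,
    (-1 : ℤ) ^ τ.card * (fixedPointIndex (f^[M / (∏ p ∈ τ, p)]) 0 : ℤ)

/-- `x` is a periodic point of exact period `M` for `g`. -/
def ExactPeriodicPt (g : Cn n → Cn n) (M : ℕ) (x : Cn n) : Prop :=
  g^[M] x = x ∧ ∀ j, 0 < j → j < M → g^[j] x ≠ x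

/-- `g` has at least `m` distinct periodic orbits of period `M` inside `B`. -/
def AtLeastOrbits (g : Cn n → Cn n) (M m : ℕ) (B : Set (Cn n)) : Prop :=
  ∃ p : Fin m → Cn n,
    (∀ i, ExactPeriodicPt g M (p i) ∧ ∀ j < M, g^[j] (p i) ∈ B) ∧
    ∀ i j : Fin m, i ≠ j → ∀ l < M, g^[l] (p i) ≠ p j

/-- `g` has exactly `m` distinct periodic orbits of period `M` inside `B`. -/
def ExactlyOrbits (g : Cn n → Cn n) (M m : ℕ) (B : Set (Cn n)) : Prop :=
  AtLeastOrbits g M m B ∧ ¬ AtLeastOrbits g M (m + 1) B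

/-- The number `𝒪_M(f,0)` of periodic orbits of period `M` of `f` hidden at the
fixed point `0`: the largest `m` such that there is a ball `B` centered at `0` in which
`0` is the only fixed point of `f^M`, and a sequence of holomorphic maps fixing `0`
converging to `f` uniformly on `B`, each having `m` distinct periodic orbits of
period `M` in `B`. -/
def hiddenOrbits (f : Cn n → Cn n) (M : ℕ) : ℕ :=
  sSup {m | ∃ r > 0,
    (∀ x ∈ closedBall (0 : Cn n) r, f^[M] x = x → x = 0) ∧
    ∃ fk : ℕ → Cn n → Cn n,
      (∀ k, AnalyticOnNhd ℂ (fk k) (ball (0 : Cn n) r) ∧ fk k 0 = 0) ∧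
      TendstoUniformlyOn fk f atTop (ball (0 : Cn n) r) ∧
      ∀ k, AtLeastOrbits (fk k) M m (ball (0 : Cn n) r)}

/-- `0` is an isolated fixed point of `g`. -/
def IsolatedFixedPtAt0 (g : Cn n → Cn n) : Prop :=
  g 0 = 0 ∧ ∀ᶠ x in 𝓝[≠] (0 : Cn n), g x ≠ x

/-- `0` is an isolated zero of `h`. -/
def IsolatedZeroAt0 (h : Cn n → Cn n) : Prop :=
  h 0 = 0 ∧ ∀ᶠ x in 𝓝[≠] (0 : Cn n), h x ≠ 0

/-- `p` is a simple fixed point of `g`: `Dg(p)` has no eigenvalue `1`. -/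
def SimpleFixedPt (g : Cn n → Cn n) (p : Cn n) : Prop :=
  g p = p ∧ ¬ Module.End.HasEigenvalue ((fderiv ℂ g p).toLinearMap) 1

/-- The global fixed point index `L(g)` of `g` over `U`: the sum of the fixed point
indices at all fixed points of `g` in `U`. -/
def globalIndex (g : Cn n → Cn n) (U : Set (Cn n)) : ℤ :=
  ∑ᶠ p ∈ {x ∈ U | g x = x}, (fixedPointIndex g p : ℤ)

/-- The global Dold index `P_M(f)` over `U`. -/
def globalDold (f : Cn n → Cn n) (M : ℕ) (U : Set (Cn n)) : ℤ :=
  ∑ τ ∈ M.primeFactors.powerset,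
    (-1 : ℤ) ^ τ.card * globalIndex (f^[M / (∏ p ∈ τ, p)]) U


open MeasureTheory

/-- complex Jacobian determinant, in coordinates -/
def pd (h : Cn 2 → Cn 2) (i j : Fin 2) (x : Cn 2) : ℂ := fderiv ℂ h x (Pi.single j 1) i

def jac (h : Cn 2 → Cn 2) (x : Cn 2) : ℂ :=
  pd h 0 0 x * pd h 1 1 x - pd h 0 1 x * pd h 1 0 x

lemma jac_eq_det (h : Cn 2 → Cn 2) (x : Cn 2) :
    jac h x = LinearMap.det (fderiv ℂ h x : Cn 2 →ₗ[ℂ] Cn 2) := by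
  rw [← LinearMap.det_toMatrix', Matrix.det_fin_two]
  simp [jac, pd, LinearMap.toMatrix'_apply, Pi.single]

lemma bij_iff_jac (h : Cn 2 → Cn 2) (x : Cn 2) :
    Function.Bijective (fderiv ℂ h x) ↔ jac h x ≠ 0 := by
  rw [jac_eq_det, ← isUnit_iff_ne_zero, ← LinearMap.isUnit_iff_isUnit_det, Module.End.isUnit_iff]
  rfl

lemma real_det (h : Cn 2 → Cn 2) (x : Cn 2) :
    ((fderiv ℂ h x).restrictScalars ℝ).det = Complex.normSq (jac h x) := by
  have := LinearMap.det_restrictScalars (R := ℝ) (S := ℂ)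
    (f := (fderiv ℂ h x : Cn 2 →ₗ[ℂ] Cn 2))
  rw [jac_eq_det, ← Algebra.norm_complex_apply, ← this]
  rfl

lemma pd_analytic {h : Cn 2 → Cn 2} {x : Cn 2} (hh : AnalyticAt ℂ h x) (i j : Fin 2) :
    AnalyticAt ℂ (pd h i j) x := by
  have h1 : AnalyticAt ℂ (fun y => fderiv ℂ h y) x := hh.fderiv
  have h2 := (ContinuousLinearMap.apply ℂ (Cn 2) (Pi.single j 1 : Cn 2)).analyticAt
    (fderiv ℂ h x) |>.comp h1
  exact ((ContinuousLinearMap.proj (R := ℂ) (φ := fun _ : Fin 2 => ℂ) i).analyticAt _).comp h2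

lemma jac_analytic {h : Cn 2 → Cn 2} {x : Cn 2} (hh : AnalyticAt ℂ h x) :
    AnalyticAt ℂ (jac h) x :=
  ((pd_analytic hh 0 0).mul (pd_analytic hh 1 1)).sub
    ((pd_analytic hh 0 1).mul (pd_analytic hh 1 0))

/-- mixed partials commute -/
lemma pd_symm {h : Cn 2 → Cn 2} {x : Cn 2} (hh : AnalyticAt ℂ h x) (i j k : Fin 2) :
    fderiv ℂ (pd h i j) x (Pi.single k 1) = fderiv ℂ (pd h i k) x (Pi.single j 1) := by
  have h1 : AnalyticAt ℂ (fun y => fderiv ℂ h y) x := hh.fderiv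
  have key : ∀ j v, fderiv ℂ (pd h i j) x v = (fderiv ℂ (fderiv ℂ h) x v (Pi.single j 1)) i := by
    intro j v
    have h2 := (ContinuousLinearMap.apply ℂ (Cn 2) (Pi.single j 1 : Cn 2)).hasFDerivAt.comp x
      h1.differentiableAt.hasFDerivAt
    have h3 := (ContinuousLinearMap.proj (R := ℂ) (φ := fun _ : Fin 2 => ℂ) i).hasFDerivAt.comp x h2
    have h4 : HasFDerivAt (pd h i j) _ x := h3
    rw [h4.fderiv]
    simp
  rw [key, key]
  have hs : IsSymmSndFDerivAt ℂ h x := (hh.contDiffAt (n := 2)).isSymmSndFDerivAt (by simp)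
  rw [hs.eq]

lemma integral_fderiv_zero {F : Cn 2 → ℂ} (hF : ContDiff ℝ 1 F) (hc : HasCompactSupport F)
    (v : Cn 2) : ∫ x, fderiv ℝ F x v = 0 := by
  have h := integral_bilinear_fderiv_right_eq_neg_left_of_integrable (μ := (volume : Measure (Cn 2)))
    (f := fun _ => (1 : ℝ)) (g := F) (v := v) (B := ContinuousLinearMap.lsmul ℝ ℝ)
    (by simp) (by
      simp
      have : Continuous (fun x => fderiv ℝ F x v) :=
        (hF.continuous_fderiv (by simp)).clm_apply continuous_const
      exact this.integrable_of_hasCompactSupport (hc.fderiv_apply ℝ v))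
    (by
      simp
      exact hF.continuous.integrable_of_hasCompactSupport hc)
    (by simp) (fun x _ => (hF.differentiable (by simp)) x)
  simpa using h

/-- extension by zero is C^1 -/
lemma contDiff_indicator {Φ : Cn 2 → ℂ} {U K : Set (Cn 2)} (hU : IsOpen U) (hK : IsClosed K)
    (hKU : K ⊆ U) (hΦ : ∀ x ∈ U, ContDiffAt ℝ 1 Φ x) (hz : ∀ x ∈ U, x ∉ K → Φ x = 0) :
    ContDiff ℝ 1 (U.indicator Φ) := by
  rw [contDiff_iff_contDiffAt]
  intro x
  by_cases hx : x ∈ U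
  · refine (hΦ x hx).congr_of_eventuallyEq ?_
    filter_upwards [hU.mem_nhds hx] with y hy
    simp [hy]
  · have hxK : x ∉ K := fun h => hx (hKU h)
    refine (contDiffAt_const (c := (0:ℂ))).congr_of_eventuallyEq ?_
    filter_upwards [hK.isOpen_compl.mem_nhds hxK] with y hy
    by_cases hyU : y ∈ U
    · simp [hyU, hz y hyU hy]
    · simp [hyU]

/-- cofactor vector field -/
def cof (h : Cn 2 → Cn 2) (a : Cn 2) (k : Fin 2) (x : Cn 2) : ℂ :=
  if k = 0 then a 0 * pd h 1 1 x - a 1 * pd h 0 1 x else a 1 * pd h 0 0 x - a 0 * pd h 1 0 x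

lemma cof_analytic {h : Cn 2 → Cn 2} {x : Cn 2} (hh : AnalyticAt ℂ h x) (a : Cn 2) (k : Fin 2) :
    AnalyticAt ℂ (cof h a k) x := by
  unfold cof
  have := fun i j => pd_analytic hh i j
  split_ifs
  · exact (analyticAt_const.mul (this 1 1)).sub (analyticAt_const.mul (this 0 1))
  · exact (analyticAt_const.mul (this 0 0)).sub (analyticAt_const.mul (this 1 0))

lemma cof_div {h : Cn 2 → Cn 2} {x : Cn 2} (hh : AnalyticAt ℂ h x) (a : Cn 2) :
    fderiv ℂ (cof h a 0) x (Pi.single 0 1) + fderiv ℂ (cof h a 1) x (Pi.single 1 1) = 0 := by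
  have d := fun i j => (pd_analytic hh i j).differentiableAt.hasFDerivAt
  have h0 : HasFDerivAt (cof h a 0) _ x := ((d 1 1).const_mul (a 0)).sub ((d 0 1).const_mul (a 1))
  have h1 : HasFDerivAt (cof h a 1) _ x := ((d 0 0).const_mul (a 1)).sub ((d 1 0).const_mul (a 0))
  rw [h0.fderiv, h1.fderiv]
  simp only [sub_apply, smul_apply, smul_eq_mul]
  rw [pd_symm hh 1 1 0, pd_symm hh 0 1 0]
  ring

lemma cof_adj {h : Cn 2 → Cn 2} {x : Cn 2} (a : Cn 2) :
    fderiv ℂ h x (Pi.single 0 (cof h a 0 x) + Pi.single 1 (cof h a 1 x)) = jac h x • a := by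
  have e : ∀ (k : Fin 2) (c : ℂ), (Pi.single k c : Cn 2) = c • Pi.single k 1 := by
    intro k c; rw [← Pi.single_smul]; simp
  rw [map_add, e 0, e 1 (cof h a 1 x), map_smul, map_smul]
  ext i
  simp only [Pi.add_apply, Pi.smul_apply, smul_eq_mul]
  change cof h a 0 x * pd h i 0 x + cof h a 1 x * pd h i 1 x = _
  fin_cases i <;> simp [cof, jac] <;> ring

/-- the vector field whose divergence we integrate -/
def vf (h : Cn 2 → Cn 2) (θ : Cn 2 → ℝ) (a : Cn 2) (k : Fin 2) (x : Cn 2) : ℂ :=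
  (θ (h x) : ℂ) * ((starRingEnd ℂ) (jac h x) * cof h a k x)

lemma vf_hasFDeriv {h : Cn 2 → Cn 2} {x : Cn 2} (hh : AnalyticAt ℂ h x) {θ : Cn 2 → ℝ}
    (hθ : ContDiff ℝ 1 θ) (a : Cn 2) (k : Fin 2) (v : Cn 2) :
    fderiv ℝ (vf h θ a k) x v =
      (θ (h x) : ℂ) * ((starRingEnd ℂ) (jac h x) * fderiv ℂ (cof h a k) x v +
          (starRingEnd ℂ) (fderiv ℂ (jac h) x v) * cof h a k x) +
        (fderiv ℝ θ (h x) (fderiv ℂ h x v) : ℂ) * ((starRingEnd ℂ) (jac h x) * cof h a k x) := by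
  have h1 := (hθ.differentiable (by simp) (h x)).hasFDerivAt.comp x
    (hh.differentiableAt.hasFDerivAt.restrictScalars ℝ)
  have h2 := Complex.ofRealCLM.hasFDerivAt.comp x h1
  have h3 := (Complex.conjCLE : ℂ →L[ℝ] ℂ).hasFDerivAt.comp x
    ((jac_analytic hh).differentiableAt.hasFDerivAt.restrictScalars ℝ)
  have h4 := (cof_analytic hh a k).differentiableAt.hasFDerivAt.restrictScalars ℝ
  have h5 : HasFDerivAt (vf h θ a k) _ x := h2.mul (h3.mul h4)
  rw [h5.fderiv]
  simp
  ring

lemma vf_contDiffAt {h : Cn 2 → Cn 2} {x : Cn 2} (hh : AnalyticAt ℂ h x) {θ : Cn 2 → ℝ}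
    (hθ : ContDiff ℝ 1 θ) (a : Cn 2) (k : Fin 2) : ContDiffAt ℝ 1 (vf h θ a k) x := by
  have h1 : ContDiffAt ℝ 1 (fun x => θ (h x)) x :=
    hθ.contDiffAt.comp x (hh.contDiffAt.restrict_scalars ℝ)
  have h2 : ContDiffAt ℝ 1 (fun x => (θ (h x) : ℂ)) x := Complex.ofRealCLM.contDiff.contDiffAt.comp x h1
  have h3 : ContDiffAt ℝ 1 (fun x => (starRingEnd ℂ) (jac h x)) x :=
    (Complex.conjCLE : ℂ →L[ℝ] ℂ).contDiff.contDiffAt.comp x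
      ((jac_analytic hh).contDiffAt.restrict_scalars ℝ)
  have h4 : ContDiffAt ℝ 1 (cof h a k) x := (cof_analytic hh a k).contDiffAt.restrict_scalars ℝ
  exact h2.mul (h3.mul h4)

lemma vf_div {h : Cn 2 → Cn 2} {x : Cn 2} (hh : AnalyticAt ℂ h x) {θ : Cn 2 → ℝ}
    (hθ : ContDiff ℝ 1 θ) (a : Cn 2) :
    (fderiv ℝ (vf h θ a 0) x (Pi.single 0 1)
      - Complex.I * fderiv ℝ (vf h θ a 0) x (Complex.I • Pi.single 0 1)) +
    (fderiv ℝ (vf h θ a 1) x (Pi.single 1 1)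
      - Complex.I * fderiv ℝ (vf h θ a 1) x (Complex.I • Pi.single 1 1)) =
    (Complex.normSq (jac h x) : ℂ) *
      ((fderiv ℝ θ (h x) a : ℂ) - Complex.I * (fderiv ℝ θ (h x) (Complex.I • a) : ℂ)) := by
  set L := fderiv ℝ θ (h x) with hL
  let Λ : Cn 2 → ℂ := fun v => (L v : ℂ) - Complex.I * (L (Complex.I • v) : ℂ)
  have Ladd : ∀ u v, Λ (u + v) = Λ u + Λ v := by
    intro u v; simp only [Λ, smul_add, map_add]; push_cast; ring
  have Lsmul : ∀ (c : ℂ) v, Λ (c • v) = c * Λ v := by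
    intro c v
    have e1 : c • v = (c.re : ℝ) • v + (c.im : ℝ) • (Complex.I • v) := by
      conv_lhs => rw [← Complex.re_add_im c]
      rw [add_smul, mul_smul]; rfl
    have e2 : Complex.I • (c • v) = (c.re : ℝ) • (Complex.I • v) - (c.im : ℝ) • v := by
      rw [e1, smul_add, smul_comm, smul_comm Complex.I (c.im), smul_smul Complex.I Complex.I]
      simp [sub_eq_add_neg]
    simp only [Λ]
    rw [e2, e1, map_add, map_sub]
    simp only [L.map_smul]
    conv_rhs => rw [← Complex.re_add_im c]
    simp only [smul_eq_mul]
    push_cast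
    linear_combination ((c.im : ℂ) * (L (Complex.I • v) : ℂ)) * Complex.I_sq
  have key := cof_adj (h := h) (x := x) a
  have e : ∀ (k : Fin 2) (c : ℂ), (Pi.single k c : Cn 2) = c • Pi.single k 1 := by
    intro k c; rw [← Pi.single_smul]; simp
  rw [map_add, e 0, e 1 (cof h a 1 x), map_smul, map_smul] at key
  have key2 := congrArg Λ key
  rw [Ladd, Lsmul, Lsmul, Lsmul] at key2
  have hd := cof_div hh a
  simp only [vf_hasFDeriv hh hθ, map_smul, smul_eq_mul, map_mul, Complex.conj_I]
  rw [← hL]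
  have hn : (Complex.normSq (jac h x) : ℂ) = (starRingEnd ℂ) (jac h x) * jac h x := by
    rw [Complex.normSq_eq_conj_mul_self]
  rw [hn]
  simp only [Λ] at key2
  linear_combination (starRingEnd ℂ) (jac h x) * key2 +
    2 * (θ (h x) : ℂ) * (starRingEnd ℂ) (jac h x) * hd +
    (θ (h x) : ℂ) * (-(starRingEnd ℂ) (jac h x) * (fderiv ℂ (cof h a 0) x (Pi.single 0 1) +
      fderiv ℂ (cof h a 1) x (Pi.single 1 1)) +
      (starRingEnd ℂ) (fderiv ℂ (jac h) x (Pi.single 0 1)) * cof h a 0 x +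
      (starRingEnd ℂ) (fderiv ℂ (jac h) x (Pi.single 1 1)) * cof h a 1 x) * Complex.I_sq

lemma nj_contOn {h : Cn 2 → Cn 2} {R : ℝ} (hh : AnalyticOnNhd ℂ h (closedBall 0 R)) :
    ContinuousOn (fun x => Complex.normSq (jac h x)) (closedBall 0 R) := by
  have h1 : ContinuousOn (jac h) (closedBall 0 R) := fun x hx =>
    (jac_analytic (hh x hx)).continuousAt.continuousWithinAt
  exact Complex.continuous_normSq.comp_continuousOn h1

lemma intOn_ball {G : Type*} [NormedAddCommGroup G] {g : Cn 2 → G} {R : ℝ}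
    (hg : ContinuousOn g (closedBall 0 R)) : IntegrableOn g (ball 0 R) :=
  (hg.integrableOn_compact (isCompact_closedBall _ _)).mono_set ball_subset_closedBall

lemma div_zero_int {h : Cn 2 → Cn 2} {R : ℝ} (hh : AnalyticOnNhd ℂ h (closedBall 0 R))
    {θ : Cn 2 → ℝ} (hθ : ContDiff ℝ 1 θ) (hs : ∀ x ∈ sphere (0 : Cn 2) R, h x ∉ tsupport θ)
    (a : Cn 2) :
    ∫ x in ball 0 R, fderiv ℝ θ (h x) a * Complex.normSq (jac h x) = 0 := by
  have hcont : ContinuousOn h (closedBall 0 R) := hh.continuousOn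
  set K : Set (Cn 2) := closedBall 0 R ∩ h ⁻¹' (tsupport θ) with hK
  have hKc : IsClosed K := hcont.preimage_isClosed_of_isClosed isClosed_closedBall (isClosed_tsupport θ)
  have hKU : K ⊆ ball 0 R := by
    rintro x ⟨hx, hx2⟩
    rcases lt_or_eq_of_le (mem_closedBall.1 hx) with h1 | h1
    · exact mem_ball.2 h1
    · exact absurd hx2 (hs x (mem_sphere.2 h1))
  let F : Fin 2 → Cn 2 → ℂ := fun k => (ball (0 : Cn 2) R).indicator (vf h θ a k)
  have hvz : ∀ k, ∀ x ∈ ball (0 : Cn 2) R, x ∉ K → vf h θ a k x = 0 := by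
    intro k x hx hxK
    have : h x ∉ tsupport θ := fun hc => hxK ⟨ball_subset_closedBall hx, hc⟩
    simp [vf, image_eq_zero_of_notMem_tsupport this]
  have hF : ∀ k, ContDiff ℝ 1 (F k) := fun k =>
    contDiff_indicator isOpen_ball hKc hKU
      (fun x hx => vf_contDiffAt (hh x (ball_subset_closedBall hx)) hθ a k) (hvz k)
  have hFc : ∀ k, HasCompactSupport (F k) := fun k => by
    refine HasCompactSupport.intro (isCompact_closedBall (0 : Cn 2) R) ?_
    intro x hx
    exact indicator_of_notMem (fun hc => hx (ball_subset_closedBall hc)) _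
  have hIntg : ∀ k v, Integrable (fun x => fderiv ℝ (F k) x v) := by
    intro k v
    have : Continuous (fun x => fderiv ℝ (F k) x v) :=
        ((hF k).continuous_fderiv (by simp)).clm_apply continuous_const
    exact this.integrable_of_hasCompactSupport ((hFc k).fderiv_apply ℝ v)
  let G : Cn 2 → ℂ := fun x => (Complex.normSq (jac h x) : ℂ) *
      ((fderiv ℝ θ (h x) a : ℂ) - Complex.I * (fderiv ℝ θ (h x) (Complex.I • a) : ℂ))
  have hsum : ∀ x, (fderiv ℝ (F 0) x (Pi.single 0 1)
      - Complex.I * fderiv ℝ (F 0) x (Complex.I • Pi.single 0 1)) +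
    (fderiv ℝ (F 1) x (Pi.single 1 1)
      - Complex.I * fderiv ℝ (F 1) x (Complex.I • Pi.single 1 1)) =
      (ball (0 : Cn 2) R).indicator G x := by
    intro x
    by_cases hx : x ∈ ball (0 : Cn 2) R
    · have : ∀ k, fderiv ℝ (F k) x = fderiv ℝ (vf h θ a k) x := by
        intro k
        apply Filter.EventuallyEq.fderiv_eq
        filter_upwards [isOpen_ball.mem_nhds hx] with y hy
        exact indicator_of_mem hy _
      rw [this, this, indicator_of_mem hx]
      exact vf_div (hh x (ball_subset_closedBall hx)) hθ a
    · have : ∀ k, fderiv ℝ (F k) x = 0 := by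
        intro k
        have : F k =ᶠ[𝓝 x] fun _ => 0 := by
          filter_upwards [hKc.isOpen_compl.mem_nhds (fun hc => hx (hKU hc))] with y hy
          by_cases hyU : y ∈ ball (0 : Cn 2) R
          · simp only [F]; rw [indicator_of_mem hyU]; exact hvz k y hyU hy
          · exact indicator_of_notMem hyU _
        rw [this.fderiv_eq]; simp
      rw [this, this, indicator_of_notMem hx]
      simp
  have hI : ∫ x in ball (0 : Cn 2) R, G x = 0 := by
    rw [← integral_indicator measurableSet_ball]
    rw [← integral_congr_ae (Eventually.of_forall hsum)]
    rw [integral_add, integral_sub, integral_sub, integral_const_mul, integral_const_mul]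
    · simp only [integral_fderiv_zero (hF _) (hFc _)]; simp
    · exact hIntg _ _
    · exact (hIntg _ _).const_mul _
    · exact hIntg _ _
    · exact (hIntg _ _).const_mul _
    · exact (hIntg _ _).sub ((hIntg _ _).const_mul _)
    · exact (hIntg _ _).sub ((hIntg _ _).const_mul _)
  have hLc : ∀ v, ContinuousOn (fun x => (fderiv ℝ θ (h x) v : ℂ)) (closedBall 0 R) := by
    intro v
    have h1 : Continuous (fun y => (fderiv ℝ θ y v : ℂ)) :=
      Complex.continuous_ofReal.comp ((hθ.continuous_fderiv (by simp)).clm_apply continuous_const)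
    exact h1.comp_continuousOn hcont
  have hGc : ContinuousOn G (closedBall 0 R) :=
    (Complex.continuous_ofReal.comp_continuousOn (nj_contOn hh)).mul
      ((hLc a).sub (continuousOn_const.mul (hLc _)))
  have hre := Complex.reCLM.integral_comp_comm (intOn_ball hGc)
  rw [hI] at hre
  simp only [map_zero] at hre
  rw [← hre]
  refine integral_congr_ae (Eventually.of_forall fun x => ?_)
  simp [G]
  ring

/-- degree integral -/
def Dg (h : Cn 2 → Cn 2) (θ : Cn 2 → ℝ) (R : ℝ) : ℝ :=
  ∫ x in ball 0 R, θ (h x) * Complex.normSq (jac h x)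

lemma jac_sub_const (h : Cn 2 → Cn 2) (q : Cn 2) : jac (fun x => h x - q) = jac h := by
  ext x
  simp [jac, pd, fderiv_sub_const]

lemma Dg_translate {h : Cn 2 → Cn 2} {R : ℝ} (hh : AnalyticOnNhd ℂ h (closedBall 0 R))
    {θ : Cn 2 → ℝ} (hθ : ContDiff ℝ 1 θ) (a : Cn 2)
    (hs : ∀ t ∈ Icc (0 : ℝ) 1, ∀ x ∈ sphere (0 : Cn 2) R, h x - t • a ∉ tsupport θ) 
    (hθc : HasCompactSupport θ) :
    Dg (fun x => h x - a) θ R = Dg h θ R := by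
  let T : ℝ → ℝ := fun t => ∫ x in ball 0 R, θ (h x - t • a) * Complex.normSq (jac h x)
  have hcont : ContinuousOn h (closedBall 0 R) := hh.continuousOn
  obtain ⟨C, hC⟩ : ∃ C, ∀ y, ‖fderiv ℝ θ y a‖ ≤ C := by
    have : Continuous (fun y => fderiv ℝ θ y a) :=
      (hθ.continuous_fderiv (by simp)).clm_apply continuous_const
    exact this.bounded_above_of_compact_support (hθc.fderiv_apply ℝ a)
  have hder : ∀ t, HasDerivAt T (∫ x in ball 0 R,
      - (fderiv ℝ θ (h x - t • a) a) * Complex.normSq (jac h x)) t := by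
    intro t
    have hc1 : ∀ t : ℝ, ContinuousOn (fun x => h x - t • a) (closedBall 0 R) := fun t =>
      hcont.sub continuousOn_const
    have hc2 : ∀ t : ℝ, ContinuousOn (fun x => θ (h x - t • a) * Complex.normSq (jac h x))
        (closedBall 0 R) := fun t => (hθ.continuous.comp_continuousOn (hc1 t)).mul (nj_contOn hh)
    have hc3 : ContinuousOn (fun x => - (fderiv ℝ θ (h x - t • a) a) * Complex.normSq (jac h x))
        (closedBall 0 R) := by
      have h1 : Continuous (fun y => fderiv ℝ θ y a) :=
        (hθ.continuous_fderiv (by simp)).clm_apply continuous_const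
      exact ((h1.comp_continuousOn (hc1 t)).neg).mul (nj_contOn hh)
    refine (hasDerivAt_integral_of_dominated_loc_of_deriv_le (s := univ)
      (bound := fun x => C * Complex.normSq (jac h x)) Filter.univ_mem
      (Eventually.of_forall fun t => (intOn_ball (hc2 t)).aestronglyMeasurable)
      (intOn_ball (hc2 t)) (intOn_ball hc3).aestronglyMeasurable
      (F' := fun t x => - (fderiv ℝ θ (h x - t • a) a) * Complex.normSq (jac h x))
      ?_ ((intOn_ball (nj_contOn hh)).const_mul C) ?_).2
    · refine Eventually.of_forall fun x t _ => ?_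
      rw [norm_mul, norm_neg]
      have : ‖Complex.normSq (jac h x)‖ = Complex.normSq (jac h x) := by
        rw [Real.norm_eq_abs, abs_of_nonneg (Complex.normSq_nonneg _)]
      rw [this]
      exact mul_le_mul_of_nonneg_right (hC _) (Complex.normSq_nonneg _)
    · refine Eventually.of_forall fun x t _ => ?_
      have h1 : HasDerivAt (fun t : ℝ => h x - t • a) (-a) t := by
        have := ((hasDerivAt_id t).smul_const a).const_sub (h x)
        simpa using this
      have h2 := (hθ.differentiable (by simp) (h x - t • a)).hasFDerivAt.comp_hasDerivAt t h1
      have h3 := h2.mul_const (Complex.normSq (jac h x))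
      simpa using h3
  have hzero : ∀ t ∈ Icc (0 : ℝ) 1, HasDerivAt T 0 t := by
    intro t ht
    have h1 := hder t
    have h2 := div_zero_int (h := fun x => h x - t • a) (R := R)
      (fun x hx => (hh x hx).sub analyticAt_const) hθ (hs t ht) a
    rw [jac_sub_const] at h2
    simp only [neg_mul] at h1
    rw [integral_neg, h2, neg_zero] at h1
    exact h1
  have hconst := constant_of_has_deriv_right_zero (f := T) (a := 0) (b := 1)
    (fun t ht => (hzero t ht).continuousAt.continuousWithinAt)
    (fun t ht => (hzero t ⟨ht.1, ht.2.le⟩).hasDerivWithinAt) 1 (by simp)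
  simp only [T, one_smul, zero_smul, sub_zero] at hconst
  unfold Dg
  rw [jac_sub_const]
  exact hconst

lemma conv_eq {h : Cn 2 → Cn 2} {R ρ : ℝ} (hh : AnalyticOnNhd ℂ h (closedBall 0 R))
    {ψ₁ ψ₂ : Cn 2 → ℝ} (h1 : Continuous ψ₁) (h2 : ContDiff ℝ 1 ψ₂)
    (s1 : tsupport ψ₁ ⊆ closedBall 0 ρ) (s2 : tsupport ψ₂ ⊆ closedBall 0 ρ)
    (hs : ∀ x ∈ sphere (0 : Cn 2) R, 2 * ρ < ‖h x‖) :
    ∫ x in ball 0 R, (∫ y, ψ₁ y * ψ₂ (h x - y)) * Complex.normSq (jac h x) =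
      Dg h ψ₂ R * ∫ y, ψ₁ y := by
  have hcont : ContinuousOn h (closedBall 0 R) := hh.continuousOn
  have hc2 : HasCompactSupport ψ₂ :=
    (isCompact_closedBall (0 : Cn 2) ρ).of_isClosed_subset (isClosed_tsupport _) s2
  have hz1 : ∀ y, y ∉ closedBall (0 : Cn 2) ρ → ψ₁ y = 0 := fun y hy =>
    image_eq_zero_of_notMem_tsupport fun hc => hy (s1 hc)
  have e1 : ∀ x, (∫ y, ψ₁ y * ψ₂ (h x - y)) * Complex.normSq (jac h x) =
      ∫ y in closedBall 0 ρ, ψ₁ y * ψ₂ (h x - y) * Complex.normSq (jac h x) := by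
    intro x
    rw [integral_mul_const]
    congr 1
    rw [setIntegral_eq_integral_of_forall_compl_eq_zero]
    intro y hy
    rw [hz1 y hy, zero_mul]
  simp_rw [e1]
  rw [integral_integral_swap]
  · have e2 : ∀ y ∈ closedBall (0 : Cn 2) ρ,
        ∫ x in ball 0 R, ψ₁ y * ψ₂ (h x - y) * Complex.normSq (jac h x) = ψ₁ y * Dg h ψ₂ R := by
      intro y hy
      simp_rw [mul_assoc]
      rw [integral_const_mul]
      congr 1
      rw [← Dg_translate hh h2 y ?_ hc2]
      · unfold Dg; rw [jac_sub_const]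
      · intro t ht x hx hmem
        have a1 := mem_closedBall_zero_iff.1 (s2 hmem)
        have a2 := hs x hx
        have a3 := mem_closedBall_zero_iff.1 hy
        have a4 : ‖t • y‖ ≤ ρ := by
          rw [norm_smul, Real.norm_eq_abs, abs_of_nonneg ht.1]
          nlinarith [ht.2, norm_nonneg y, ht.1]
        have a5 := norm_sub_norm_le (h x) (t • y)
        linarith
    rw [setIntegral_congr_fun measurableSet_closedBall e2, integral_mul_const, mul_comm]
    congr 1
    rw [setIntegral_eq_integral_of_forall_compl_eq_zero hz1]
  · rw [Measure.prod_restrict]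
    have : ContinuousOn (fun p : Cn 2 × Cn 2 => ψ₁ p.2 * ψ₂ (h p.1 - p.2) *
        Complex.normSq (jac h p.1)) (closedBall 0 R ×ˢ closedBall 0 ρ) := by
      have f1 : MapsTo (Prod.fst : Cn 2 × Cn 2 → Cn 2) (closedBall 0 R ×ˢ closedBall 0 ρ)
        (closedBall 0 R) := fun p hp => hp.1
      have c1 := hcont.comp continuousOn_fst f1
      have c2 := (nj_contOn hh).comp continuousOn_fst f1
      exact ((h1.comp_continuousOn continuousOn_snd).mul
        (h2.continuous.comp_continuousOn (c1.sub continuousOn_snd))).mul c2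
    have h3 := this.integrableOn_compact (μ := (volume : Measure (Cn 2)).prod volume)
      ((isCompact_closedBall (0 : Cn 2) R).prod (isCompact_closedBall (0 : Cn 2) ρ))
    exact h3.mono_set (prod_mono ball_subset_closedBall Subset.rfl)

lemma Dg_indep {h : Cn 2 → Cn 2} {R ρ : ℝ} (hh : AnalyticOnNhd ℂ h (closedBall 0 R))
    {ψ₁ ψ₂ : Cn 2 → ℝ} (h1 : ContDiff ℝ 1 ψ₁) (h2 : ContDiff ℝ 1 ψ₂)
    (s1 : tsupport ψ₁ ⊆ closedBall 0 ρ) (s2 : tsupport ψ₂ ⊆ closedBall 0 ρ)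
    (hs : ∀ x ∈ sphere (0 : Cn 2) R, 2 * ρ < ‖h x‖) :
    Dg h ψ₂ R * ∫ y, ψ₁ y = Dg h ψ₁ R * ∫ y, ψ₂ y := by
  rw [← conv_eq hh h1.continuous h2 s1 s2 hs, ← conv_eq hh h2.continuous h1 s2 s1 hs]
  congr 1
  ext x
  congr 1
  rw [← integral_sub_left_eq_self _ _ (h x)]
  congr 1
  ext y
  rw [sub_sub_cancel, mul_comm]

/-- local structure at a regular point -/
lemma local_inj {h : Cn 2 → Cn 2} {x : Cn 2} (hx : AnalyticAt ℂ h x) (hj : jac h x ≠ 0)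
    {W : Set (Cn 2)} (hW : W ∈ 𝓝 x) :
    ∃ U, IsOpen U ∧ x ∈ U ∧ U ⊆ W ∧ InjOn h U ∧ h '' U ∈ 𝓝 (h x) := by
  have hb := (bij_iff_jac h x).2 hj
  have hs : HasStrictFDerivAt h (fderiv ℂ h x) x := hx.hasStrictFDerivAt
  let e : Cn 2 ≃L[ℂ] Cn 2 := ContinuousLinearEquiv.ofBijective (fderiv ℂ h x)
    (LinearMap.ker_eq_bot.2 hb.1) (LinearMap.range_eq_top.2 hb.2)
  have hs' : HasStrictFDerivAt h (e : Cn 2 →L[ℂ] Cn 2) x := by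
    convert hs using 1
    ext1 v
    exact congrFun (ContinuousLinearEquiv.coeFn_ofBijective (fderiv ℂ h x)
      (LinearMap.ker_eq_bot.2 hb.1) (LinearMap.range_eq_top.2 hb.2)) v
  let Φ := hs'.toOpenPartialHomeomorph h
  obtain ⟨V, hVW, hVo, hxV⟩ := _root_.mem_nhds_iff.1 hW
  refine ⟨Φ.source ∩ V, Φ.open_source.inter hVo, ⟨hs'.mem_toOpenPartialHomeomorph_source, hxV⟩,
    fun y hy => hVW hy.2, fun y hy z hz => Φ.injOn hy.1 hz.1, ?_⟩
  rw [← hs'.map_nhds_eq_of_equiv]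
  exact image_mem_map ((Φ.open_source.inter hVo).mem_nhds
    ⟨hs'.mem_toOpenPartialHomeomorph_source, hxV⟩)

def Sol (h : Cn 2 → Cn 2) (R : ℝ) (q : Cn 2) : Set (Cn 2) := {x ∈ ball (0 : Cn 2) R | h x = q}

lemma sol_finite {h : Cn 2 → Cn 2} {R : ℝ} (hh : AnalyticOnNhd ℂ h (closedBall 0 R)) {q : Cn 2}
    (hs : ∀ x ∈ sphere (0 : Cn 2) R, h x ≠ q) (hreg : IsRegularValueOn h (ball 0 R) q) :
    (Sol h R q).Finite := by
  have hcont : ContinuousOn h (closedBall 0 R) := hh.continuousOn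
  have heq : Sol h R q = closedBall 0 R ∩ h ⁻¹' {q} := by
    ext x
    constructor
    · rintro ⟨hx, hx2⟩; exact ⟨ball_subset_closedBall hx, hx2⟩
    · rintro ⟨hx, hx2⟩
      rcases lt_or_eq_of_le (mem_closedBall.1 hx) with h1 | h1
      · exact ⟨mem_ball.2 h1, hx2⟩
      · exact absurd hx2 (hs x (mem_sphere.2 h1))
  have hcl : IsClosed (Sol h R q) := by
    rw [heq]; exact hcont.preimage_isClosed_of_isClosed isClosed_closedBall isClosed_singleton
  have hcpt : IsCompact (Sol h R q) := (isCompact_closedBall (0 : Cn 2) R).of_isClosed_subset hcl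
    (fun x hx => ball_subset_closedBall hx.1)
  have hloc : ∀ x ∈ Sol h R q, ∃ U, IsOpen U ∧ x ∈ U ∧ U ∩ Sol h R q ⊆ {x} := by
    intro x hx
    obtain ⟨U, hUo, hxU, -, hinj, -⟩ := local_inj (hh x (ball_subset_closedBall hx.1))
      ((bij_iff_jac h x).1 (hreg x hx.1 hx.2)) Filter.univ_mem
    exact ⟨U, hUo, hxU, fun y hy => hinj hy.1 hxU (hy.2.2.trans hx.2.symm)⟩
  choose! U hUo hxU hU using hloc
  obtain ⟨t, hts, ht⟩ := hcpt.elim_nhds_subcover U (fun x hx => (hUo x hx).mem_nhds (hxU x hx))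
  refine t.finite_toSet.subset fun y hy => ?_
  obtain ⟨x, hxt, hyx⟩ := mem_iUnion₂.1 (ht hy)
  have : y = x := hU x (hts x hxt) ⟨hyx, hy⟩
  exact this ▸ hxt

lemma local_count {h : Cn 2 → Cn 2} {R : ℝ} (hh : AnalyticOnNhd ℂ h (closedBall 0 R)) {q : Cn 2}
    (hs : ∀ x ∈ sphere (0 : Cn 2) R, h x ≠ q) (hreg : IsRegularValueOn h (ball 0 R) q) :
    ∃ ρ > 0, ∀ ψ : Cn 2 → ℝ, Continuous ψ → tsupport ψ ⊆ closedBall 0 ρ →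
      Dg (fun x => h x - q) ψ R = (Sol h R q).ncard * ∫ y, ψ y := by
  have hcont : ContinuousOn h (closedBall 0 R) := hh.continuousOn
  have hfin := sol_finite hh hs hreg
  obtain ⟨V, hV, hVd⟩ := hfin.t2_separation
  have hloc : ∀ x ∈ Sol h R q, ∃ U, IsOpen U ∧ x ∈ U ∧ U ⊆ V x ∩ ball 0 R ∧ InjOn h U ∧
      h '' U ∈ 𝓝 (h x) := fun x hx => local_inj (hh x (ball_subset_closedBall hx.1))
      ((bij_iff_jac h x).1 (hreg x hx.1 hx.2))
      (((hV x).2.inter isOpen_ball).mem_nhds ⟨(hV x).1, hx.1⟩)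
  choose! U hUo hxU hUV hUinj hUim using hloc
  set S := hfin.toFinset with hS
  have hmS : ∀ x, x ∈ S ↔ x ∈ Sol h R q := fun x => hfin.mem_toFinset
  -- outside
  set O : Set (Cn 2) := ⋃ x ∈ S, U x with hO
  have hOo : IsOpen O := isOpen_biUnion fun x hx => hUo x ((hmS x).1 hx)
  have hc : IsCompact (closedBall (0 : Cn 2) R \ O) := (isCompact_closedBall _ _).diff hOo
  have hne : ∃ ρ₁ > 0, ∀ x ∈ closedBall (0 : Cn 2) R \ O, ρ₁ ≤ ‖h x - q‖ := by
    have hp : ∀ x ∈ closedBall (0 : Cn 2) R \ O, 0 < ‖h x - q‖ := by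
      rintro x ⟨hx, hxO⟩
      rw [norm_pos_iff, sub_ne_zero]
      intro hxq
      rcases lt_or_eq_of_le (mem_closedBall.1 hx) with h1 | h1
      · have : x ∈ Sol h R q := ⟨mem_ball.2 h1, hxq⟩
        exact hxO (mem_iUnion₂.2 ⟨x, (hmS x).2 this, hxU x this⟩)
      · exact hs x (mem_sphere.2 h1) hxq
    exact hc.exists_forall_le' (((hcont.mono sdiff_subset).sub continuousOn_const).norm) hp
  obtain ⟨ρ₁, hρ₁, hρ₁'⟩ := hne
  have him : ∀ᶠ ρ in 𝓝[>] (0 : ℝ), ∀ x ∈ S, closedBall q ρ ⊆ h '' (U x) := by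
    rw [Filter.eventually_all_finset]
    intro x hx
    have hx' := (hmS x).1 hx
    have h1 := hUim x hx'
    rw [hx'.2] at h1
    obtain ⟨ε, hε, hb⟩ := nhds_basis_closedBall.mem_iff.1 h1
    filter_upwards [Ioo_mem_nhdsGT hε] with ρ hρ
    exact (closedBall_subset_closedBall hρ.2.le).trans hb
  obtain ⟨ρ, him, hρ⟩ := (him.and (Ioo_mem_nhdsGT hρ₁)).exists
  refine ⟨ρ, hρ.1, fun ψ hψ hsψ => ?_⟩
  have hψz : ∀ y, ρ < ‖y‖ → ψ y = 0 := fun y hy =>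
    image_eq_zero_of_notMem_tsupport fun hc => by
      have := mem_closedBall_zero_iff.1 (hsψ hc); linarith
  have hOB : O ⊆ ball 0 R := iUnion₂_subset fun x hx =>
    (hUV x ((hmS x).1 hx)).trans inter_subset_right
  have hg : ContinuousOn (fun x => ψ (h x - q) * Complex.normSq (jac h x)) (closedBall 0 R) :=
    (hψ.comp_continuousOn (hcont.sub continuousOn_const)).mul (nj_contOn hh)
  unfold Dg
  rw [jac_sub_const]
  rw [setIntegral_eq_of_subset_of_forall_sdiff_eq_zero measurableSet_ball hOB, hO,
    integral_biUnion_finset]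
  · have : ∀ x ∈ S, ∫ y in U x, ψ (h y - q) * Complex.normSq (jac h y) = ∫ y, ψ y := by
      intro x hx
      have hx' := (hmS x).1 hx
      have h1 := integral_image_eq_integral_abs_det_fderiv_smul (volume : Measure (Cn 2))
        (s := U x) (f := h) (f' := fun y => (fderiv ℂ h y).restrictScalars ℝ)
        (hUo x hx').measurableSet
        (fun y hy => ((hh y (ball_subset_closedBall (hUV x hx' hy).2)).differentiableAt.hasFDerivAt.restrictScalars ℝ).hasFDerivWithinAt)
        (hUinj x hx') (fun y => ψ (y - q))
      simp only [real_det, abs_of_nonneg (Complex.normSq_nonneg _), smul_eq_mul] at h1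
      simp_rw [mul_comm (ψ _)]
      rw [← h1, setIntegral_eq_integral_of_forall_compl_eq_zero]
      · exact integral_sub_right_eq_self (fun y => ψ y) q
      · intro y hy
        apply hψz
        by_contra hcon
        apply hy
        apply him x hx
        rw [mem_closedBall, dist_eq_norm]
        linarith
    rw [Finset.sum_congr rfl this, Finset.sum_const, nsmul_eq_mul, ncard_eq_toFinset_card _ hfin]
  · exact fun x hx => (hUo x ((hmS x).1 hx)).measurableSet
  · intro x hx y hy hxy
    exact (hVd ((hmS x).1 hx) ((hmS y).1 hy) hxy).mono
      ((hUV x ((hmS x).1 hx)).trans inter_subset_left)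
      ((hUV y ((hmS y).1 hy)).trans inter_subset_left)
  · intro x hx
    exact (intOn_ball hg).mono_set ((hUV x ((hmS x).1 hx)).trans inter_subset_right)
  · rintro x ⟨hx, hxO⟩
    have := hρ₁' x ⟨ball_subset_closedBall hx, hxO⟩
    rw [hψz _ (hρ.2.trans_le this), zero_mul]

lemma count_eq {h : Cn 2 → Cn 2} {R ρ : ℝ} (hh : AnalyticOnNhd ℂ h (closedBall 0 R)) (hρ : 0 < ρ)
    (hs : ∀ x ∈ sphere (0 : Cn 2) R, 3 * ρ < ‖h x‖) {ψ : Cn 2 → ℝ} (hψ : ContDiff ℝ 1 ψ)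
    (sψ : tsupport ψ ⊆ closedBall 0 ρ) (iψ : ∫ y, ψ y = 1) {q : Cn 2} (hq : ‖q‖ ≤ ρ)
    (hreg : IsRegularValueOn h (ball 0 R) q) : ((Sol h R q).ncard : ℝ) = Dg h ψ R := by
  have hcψ : HasCompactSupport ψ :=
    (isCompact_closedBall (0 : Cn 2) ρ).of_isClosed_subset (isClosed_tsupport _) sψ
  obtain ⟨ρ', hρ', hl⟩ := local_count hh (q := q) (fun x hx hc => by
    have := hs x hx; rw [hc] at this; linarith) hreg
  have hm : 0 < min ρ ρ' := lt_min hρ hρ'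
  let φ : ContDiffBump (0 : Cn 2) := ⟨min ρ ρ' / 2, min ρ ρ', by linarith, by linarith⟩
  have sφ : tsupport (φ.normed volume) = closedBall 0 (min ρ ρ') := φ.tsupport_normed_eq
  have iφ : ∫ y, φ.normed volume y = 1 := φ.integral_normed
  have cφ : ContDiff ℝ 1 (φ.normed volume) := φ.contDiff_normed
  have h1 := hl _ cφ.continuous (sφ ▸ closedBall_subset_closedBall (min_le_right _ _))
  rw [iφ, mul_one] at h1
  have h2 := Dg_indep (h := fun x => h x - q) (R := R) (ρ := ρ)
    (fun x hx => (hh x hx).sub analyticAt_const) cφ hψ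
    (sφ ▸ closedBall_subset_closedBall (min_le_left _ _)) sψ (fun x hx => by
      have := hs x hx
      have := norm_sub_norm_le (h x) q
      linarith)
  rw [iφ, iψ, mul_one, mul_one] at h2
  rw [← h1, ← h2]
  refine Dg_translate hh hψ q ?_ hcψ
  intro t ht x hx hmem
  have a1 := mem_closedBall_zero_iff.1 (sψ hmem)
  have a2 := hs x hx
  have a4 : ‖t • q‖ ≤ ρ := by
    rw [norm_smul, Real.norm_eq_abs, abs_of_nonneg ht.1]
    nlinarith [ht.2, norm_nonneg q, ht.1]
  have a5 := norm_sub_norm_le (h x) (t • q)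
  linarith

lemma sard {h : Cn 2 → Cn 2} {R : ℝ} (hh : AnalyticOnNhd ℂ h (closedBall 0 R)) 
    {W : Set (Cn 2)} {q₀ : Cn 2} (hW : W ∈ 𝓝 q₀) :
    ∃ q ∈ W, IsRegularValueOn h (ball 0 R) q := by
  set C : Set (Cn 2) := {x ∈ ball (0 : Cn 2) R | jac h x = 0} with hC
  have h0 := addHaar_image_eq_zero_of_det_fderivWithin_eq_zero (volume : Measure (Cn 2)) (s := C) (f := h)
    (f' := fun y => (fderiv ℂ h y).restrictScalars ℝ)
    (fun y hy => ((hh y (ball_subset_closedBall hy.1)).differentiableAt.hasFDerivAt.restrictScalars ℝ).hasFDerivWithinAt)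
    (fun y hy => by rw [real_det, hy.2]; simp)
  have h1 : ¬ W ⊆ h '' C := by
    intro hsub
    have := measure_mono_null hsub h0
    exact (Measure.measure_pos_of_mem_nhds volume hW).ne' this
  obtain ⟨q, hqW, hq⟩ := not_subset.1 h1
  refine ⟨q, hqW, fun x hx hxq => (bij_iff_jac h x).2 fun hj => hq ⟨x, ⟨hx, hj⟩, hxq⟩⟩

lemma reg_open {h : Cn 2 → Cn 2} {R : ℝ} (hh : AnalyticOnNhd ℂ h (closedBall 0 R)) {q₀ : Cn 2}
    (hs : ∀ x ∈ sphere (0 : Cn 2) R, h x ≠ q₀) (hreg : IsRegularValueOn h (ball 0 R) q₀) :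
    ∀ᶠ q in 𝓝 q₀, IsRegularValueOn h (ball 0 R) q := by
  set C : Set (Cn 2) := closedBall 0 R ∩ jac h ⁻¹' {0} with hC
  have hjc : ContinuousOn (jac h) (closedBall 0 R) := fun x hx =>
    (jac_analytic (hh x hx)).continuousAt.continuousWithinAt
  have hCc : IsCompact C := (isCompact_closedBall (0 : Cn 2) R).of_isClosed_subset
    (hjc.preimage_isClosed_of_isClosed isClosed_closedBall isClosed_singleton) inter_subset_left
  have him : IsClosed (h '' C) :=
    (hCc.image_of_continuousOn (hh.continuousOn.mono inter_subset_left)).isClosed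
  have hq : q₀ ∉ h '' C := by
    rintro ⟨x, ⟨hx, hj⟩, hxq⟩
    rcases lt_or_eq_of_le (mem_closedBall.1 hx) with h1 | h1
    · exact (bij_iff_jac h x).1 (hreg x (mem_ball.2 h1) hxq) hj
    · exact hs x (mem_sphere.2 h1) hxq
  filter_upwards [him.isOpen_compl.mem_nhds hq] with q hq x hx hxq
  exact (bij_iff_jac h x).2 fun hj => hq ⟨x, ⟨ball_subset_closedBall hx, hj⟩, hxq⟩

def IsDeg (h : Cn 2 → Cn 2) (R : ℝ) (m : ℕ) : Prop :=
  ∀ᶠ q in 𝓝 (0 : Cn 2), IsRegularValueOn h (ball 0 R) q → (Sol h R q).ncard = m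

lemma exists_bump {ρ : ℝ} (hρ : 0 < ρ) : ∃ ψ : Cn 2 → ℝ, ContDiff ℝ 1 ψ ∧
    tsupport ψ ⊆ closedBall 0 ρ ∧ ∫ y, ψ y = 1 := by
  let φ : ContDiffBump (0 : Cn 2) := ⟨ρ / 2, ρ, by linarith, by linarith⟩
  exact ⟨φ.normed volume, φ.contDiff_normed, φ.tsupport_normed_eq.subset, φ.integral_normed⟩

lemma sphere_bound {h : Cn 2 → Cn 2} {R : ℝ} (hh : AnalyticOnNhd ℂ h (closedBall 0 R))
    (hs : ∀ x ∈ sphere (0 : Cn 2) R, h x ≠ 0) :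
    ∃ ρ > 0, ∀ x ∈ sphere (0 : Cn 2) R, 3 * ρ < ‖h x‖ := by
  obtain ⟨c, hc, hc'⟩ := (isCompact_sphere (0 : Cn 2) R).exists_forall_le'
    (f := fun x => ‖h x‖) (a := 0)
    ((hh.continuousOn.mono sphere_subset_closedBall).norm) (fun x hx => norm_pos_iff.2 (hs x hx))
  exact ⟨c / 4, by linarith, fun x hx => by linarith [hc' x hx]⟩

/-- `Dg` is a natural number equal to the degree -/
lemma deg_of_bound {h : Cn 2 → Cn 2} {R ρ : ℝ} (hh : AnalyticOnNhd ℂ h (closedBall 0 R))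
    (hρ : 0 < ρ)
    (hs : ∀ x ∈ sphere (0 : Cn 2) R, 3 * ρ < ‖h x‖) {ψ : Cn 2 → ℝ} (hψ : ContDiff ℝ 1 ψ)
    (sψ : tsupport ψ ⊆ closedBall 0 ρ) (iψ : ∫ y, ψ y = 1) :
    ∃ m : ℕ, (m : ℝ) = Dg h ψ R ∧ IsDeg h R m := by
  obtain ⟨q, hq, hreg⟩ := sard hh (ball_mem_nhds (0 : Cn 2) hρ)
  refine ⟨_, count_eq hh hρ hs hψ sψ iψ (mem_ball_zero_iff.1 hq).le hreg, ?_⟩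
  filter_upwards [ball_mem_nhds (0 : Cn 2) hρ] with q' hq' hreg'
  have h1 := count_eq hh hρ hs hψ sψ iψ (mem_ball_zero_iff.1 hq).le hreg
  have h2 := count_eq hh hρ hs hψ sψ iψ (mem_ball_zero_iff.1 hq').le hreg'
  exact_mod_cast h2.trans h1.symm

lemma exists_deg {h : Cn 2 → Cn 2} {R : ℝ} (hh : AnalyticOnNhd ℂ h (closedBall 0 R))
    (hs : ∀ x ∈ sphere (0 : Cn 2) R, h x ≠ 0) : ∃ m, IsDeg h R m := by
  obtain ⟨ρ, hρ, hb⟩ := sphere_bound hh hs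
  obtain ⟨ψ, h1, h2, h3⟩ := exists_bump hρ
  obtain ⟨m, -, hm⟩ := deg_of_bound hh hρ hb h1 h2 h3
  exact ⟨m, hm⟩

lemma deg_unique {h : Cn 2 → Cn 2} {R : ℝ} (hh : AnalyticOnNhd ℂ h (closedBall 0 R)) {m m' : ℕ}
    (h1 : IsDeg h R m) (h2 : IsDeg h R m') : m = m' := by
  obtain ⟨q, hq, hreg⟩ := sard hh (h1.and h2)
  rw [← hq.1 hreg, ← hq.2 hreg]

section family
variable {P : Type*} [NormedAddCommGroup P] [NormedSpace ℂ P]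

lemma fam_slice {H : P → Cn 2 → Cn 2} {t : P} {x : Cn 2}
    (hH : AnalyticAt ℂ (fun p : P × Cn 2 => H p.1 p.2) (t, x)) : AnalyticAt ℂ (H t) x := by
  have h1 : AnalyticAt ℂ (fun y : Cn 2 => (t, y)) x := by fun_prop
  exact hH.comp (f := fun y : Cn 2 => (t, y)) h1

lemma fam_jac_cont {H : P → Cn 2 → Cn 2} {t : P} {x : Cn 2}
    (hH : AnalyticAt ℂ (fun p : P × Cn 2 => H p.1 p.2) (t, x)) [CompleteSpace P] :
    ContinuousAt (fun p : P × Cn 2 => jac (H p.1) p.2) (t, x) := by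
  set G := fun p : P × Cn 2 => H p.1 p.2 with hG
  have hpd : ∀ i j, ContinuousAt (fun p : P × Cn 2 => pd (H p.1) i j p.2) (t, x) := by
    intro i j
    have h1 : ContinuousAt (fderiv ℂ G) (t, x) := hH.fderiv.continuousAt
    have h2 : ContinuousAt (fun p => fderiv ℂ G p (0, Pi.single j 1) i) (t, x) :=
      (continuous_apply i).continuousAt.comp (h1.clm_apply continuousAt_const)
    refine h2.congr ?_
    filter_upwards [hH.eventually_analyticAt] with p hp
    have h3 : HasFDerivAt (fun y : Cn 2 => (p.1, y)) (ContinuousLinearMap.inr ℂ P (Cn 2)) p.2 :=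
      hasFDerivAt_prodMk_right p.1 p.2
    have h4 : HasFDerivAt (H p.1) _ p.2 :=
      (HasFDerivAt.comp p.2 (g := G) (f := fun y : Cn 2 => (p.1, y))
        hp.differentiableAt.hasFDerivAt h3)
    unfold pd
    rw [h4.fderiv]
    simp
  exact ((hpd 0 0).mul (hpd 1 1)).sub ((hpd 0 1).mul (hpd 1 0))

lemma fam_deg [CompleteSpace P] {H : P → Cn 2 → Cn 2} {R : ℝ} {t₀ : P} {m : ℕ}
    (hH : ∀ t, ∀ x ∈ closedBall (0 : Cn 2) R, AnalyticAt ℂ (fun p : P × Cn 2 => H p.1 p.2) (t, x))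
    (hs : ∀ x ∈ sphere (0 : Cn 2) R, H t₀ x ≠ 0) (hm : IsDeg (H t₀) R m) :
    ∀ᶠ t in 𝓝 t₀, IsDeg (H t) R m ∧ ∀ x ∈ sphere (0 : Cn 2) R, H t x ≠ 0 := by
  have hh : ∀ t, AnalyticOnNhd ℂ (H t) (closedBall 0 R) := fun t x hx => fam_slice (hH t x hx)
  obtain ⟨ρ, hρ, hb⟩ := sphere_bound (hh t₀) hs
  obtain ⟨ψ, h1, h2, h3⟩ := exists_bump hρ
  have hev : ∀ᶠ t in 𝓝 t₀, ∀ x ∈ sphere (0 : Cn 2) R, 3 * ρ < ‖H t x‖ := by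
    refine (isCompact_sphere (0 : Cn 2) R).eventually_forall_of_forall_eventually fun x hx => ?_
    exact ((hH t₀ x (sphere_subset_closedBall hx)).continuousAt.norm).eventually
      (lt_mem_nhds (hb x hx))
  let Φ : P → Cn 2 → ℝ := fun t x => ψ (H t x) * Complex.normSq (jac (H t) x)
  have hΦ : ∀ x ∈ closedBall (0 : Cn 2) R, ContinuousAt (fun p : P × Cn 2 => Φ p.1 p.2) (t₀, x) := by
    intro x hx
    have a1 : ContinuousAt (fun p : P × Cn 2 => ψ (H p.1 p.2)) (t₀, x) :=
      ContinuousAt.comp (f := fun p : P × Cn 2 => H p.1 p.2) (g := ψ)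
        h1.continuous.continuousAt (hH t₀ x hx).continuousAt
    have a2 : ContinuousAt (fun p : P × Cn 2 => Complex.normSq (jac (H p.1) p.2)) (t₀, x) :=
      ContinuousAt.comp (f := fun p : P × Cn 2 => jac (H p.1) p.2) (g := Complex.normSq)
        Complex.continuous_normSq.continuousAt (fam_jac_cont (hH t₀ x hx))
    exact a1.mul a2
  have hΦc : ∀ t, ContinuousOn (Φ t) (closedBall 0 R) := fun t =>
    (h1.continuous.comp_continuousOn (hh t).continuousOn).mul (nj_contOn (hh t))
  obtain ⟨C, hC⟩ := (isCompact_closedBall (0 : Cn 2) R).exists_bound_of_continuousOn (hΦc t₀)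
  have hbd : ∀ᶠ t in 𝓝 t₀, ∀ x ∈ closedBall (0 : Cn 2) R, ‖Φ t x‖ < C + 1 := by
    refine (isCompact_closedBall (0 : Cn 2) R).eventually_forall_of_forall_eventually fun x hx => ?_
    exact ((hΦ x hx).norm).eventually (gt_mem_nhds (by have := hC x hx; simp only; linarith))
  have hcD : ContinuousAt (fun t => Dg (H t) ψ R) t₀ := by
    refine continuousAt_of_dominated (F := Φ) (bound := fun _ => C + 1)
      (Eventually.of_forall fun t => (intOn_ball (hΦc t)).aestronglyMeasurable) ?_ ?_ ?_
    · filter_upwards [hbd] with t ht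
      exact ae_restrict_of_forall_mem measurableSet_ball
        fun x hx => (ht x (ball_subset_closedBall hx)).le
    · exact intOn_ball continuousOn_const
    · refine ae_restrict_of_forall_mem measurableSet_ball fun x hx => ?_
      exact ContinuousAt.comp (f := fun t => (t, x)) (g := fun p : P × Cn 2 => Φ p.1 p.2)
        (hΦ x (ball_subset_closedBall hx)) (by fun_prop)
  obtain ⟨m₀, hm₀, hd₀⟩ := deg_of_bound (hh t₀) hρ hb h1 h2 h3
  have hmm : m₀ = m := deg_unique (hh t₀) hd₀ hm
  have hclose := hcD.eventually (Metric.ball_mem_nhds _ (zero_lt_one))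
  filter_upwards [hev, hclose] with t ht hct
  obtain ⟨m₁, hm₁, hd₁⟩ := deg_of_bound (hh t) hρ ht h1 h2 h3
  have : m₁ = m₀ := by
    have h5 : |(m₁ : ℝ) - m₀| < 1 := by
      rw [hm₁, hm₀]; exact hct
    have h6 : |(m₁ : ℤ) - m₀| < 1 := by exact_mod_cast h5
    rw [Int.abs_lt_one_iff] at h6
    omega
  refine ⟨by rw [← hmm, ← this]; exact hd₁, fun x hx hc => ?_⟩
  have := ht x hx
  rw [hc, norm_zero] at this
  linarith

end family

lemma lower_semi {h : Cn 2 → Cn 2} {R : ℝ} (hh : AnalyticOnNhd ℂ h (closedBall 0 R))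
    (hs : ∀ x ∈ sphere (0 : Cn 2) R, h x ≠ 0) {m : ℕ} (hm : IsDeg h R m) (S : Finset (Cn 2))
    (hS : ∀ x ∈ S, x ∈ ball (0 : Cn 2) R ∧ h x = 0 ∧ jac h x ≠ 0) : S.card ≤ m := by
  obtain ⟨U, hU, hd⟩ := (S.finite_toSet).t2_separation
  have hV : ∀ x ∈ S, h '' (U x ∩ ball 0 R) ∈ 𝓝 (0 : Cn 2) := by
    intro x hx
    obtain ⟨hb, hz, hj⟩ := hS x hx
    obtain ⟨V, -, -, hVW, -, hVn⟩ := local_inj (hh x (ball_subset_closedBall hb)) hj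
      (inter_mem ((hU x).2.mem_nhds (hU x).1) (isOpen_ball.mem_nhds hb))
    rw [hz] at hVn
    exact mem_of_superset hVn (image_mono hVW)
  have hV' : (⋂ x ∈ S, h '' (U x ∩ ball 0 R)) ∈ 𝓝 (0 : Cn 2) := (biInter_finset_mem S).2 hV
  obtain ⟨ρ, hρ, hb⟩ := sphere_bound hh hs
  obtain ⟨q, ⟨⟨hq1, hq2⟩, hq3⟩, hreg⟩ := sard (W := {q | (IsRegularValueOn h (ball 0 R) q → (Sol h R q).ncard = m) ∧ q ∈ (⋂ x ∈ S, h '' (U x ∩ ball 0 R))} ∩ ball 0 ρ) hh (inter_mem (inter_mem hm hV') (ball_mem_nhds (0 : Cn 2) hρ))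
  have hfin : (Sol h R q).Finite := sol_finite hh (fun x hx hc => by
    have := hb x hx
    rw [hc] at this
    have := mem_ball_zero_iff.1 hq3
    linarith) hreg
  rw [← hq1 hreg]
  simp only [mem_iInter] at hq2
  choose! y hy1 hy2 using hq2
  rw [← Set.ncard_coe_finset]
  refine Set.ncard_le_ncard_of_injOn y (fun x hx => ⟨(hy1 x hx).2, hy2 x hx⟩) ?_ hfin
  intro a ha b hb' hab
  by_contra hne
  exact Set.disjoint_left.1 (hd ha hb' hne) (hy1 a ha).1 (hab ▸ (hy1 b hb').1)

def pr (g k : Cn 2 → ℂ) : Cn 2 → Cn 2 := fun x => ![g x, k x]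

lemma pr_eq_iff {g k : Cn 2 → ℂ} {x q : Cn 2} : pr g k x = q ↔ g x = q 0 ∧ k x = q 1 := by
  constructor
  · rintro rfl; simp [pr]
  · rintro ⟨h1, h2⟩; ext i; fin_cases i <;> simp [pr, h1, h2]

lemma pr_analyticAt {g k : Cn 2 → ℂ} {x : Cn 2} (hg : AnalyticAt ℂ g x) (hk : AnalyticAt ℂ k x) :
    AnalyticAt ℂ (pr g k) x := by
  apply AnalyticAt.pi
  intro i
  fin_cases i
  · exact hg
  · exact hk

lemma jac_pr {g k : Cn 2 → ℂ} {x : Cn 2} {g' k' : Cn 2 →L[ℂ] ℂ} (hg : HasFDerivAt g g' x)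
    (hk : HasFDerivAt k k' x) : jac (pr g k) x =
      g' (Pi.single 0 1) * k' (Pi.single 1 1) - g' (Pi.single 1 1) * k' (Pi.single 0 1) := by
  have h : HasFDerivAt (pr g k) (ContinuousLinearMap.pi ![g', k']) x := by
    rw [hasFDerivAt_pi']
    intro i
    fin_cases i
    · exact hg
    · exact hk
  unfold jac pd
  rw [h.fderiv]
  simp

lemma isDeg_swap {g k : Cn 2 → ℂ} {R : ℝ} (hg : AnalyticOnNhd ℂ g (closedBall 0 R))
    (hk : AnalyticOnNhd ℂ k (closedBall 0 R)) {m : ℕ} (hm : IsDeg (pr g k) R m) :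
    IsDeg (pr k g) R m := by
  have hc : Tendsto (fun q : Cn 2 => (![q 1, q 0] : Cn 2)) (𝓝 0) (𝓝 0) := by
    have : Continuous (fun q : Cn 2 => (![q 1, q 0] : Cn 2)) := by fun_prop
    have h := this.tendsto 0
    convert h using 2
    ext i; fin_cases i <;> simp
  filter_upwards [hc.eventually hm] with q hq hreg
  have e : Sol (pr k g) R q = Sol (pr g k) R ![q 1, q 0] := by
    ext x; simp [Sol, pr_eq_iff, and_comm]
  rw [e]
  refine hq fun x hx hxq => ?_
  have h1 := hreg x hx (by rw [pr_eq_iff] at hxq ⊢; simpa [and_comm] using hxq)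
  rw [bij_iff_jac] at h1 ⊢
  have dg := (hg x (ball_subset_closedBall hx)).differentiableAt.hasFDerivAt
  have dk := (hk x (ball_subset_closedBall hx)).differentiableAt.hasFDerivAt
  rw [jac_pr dg dk]
  rw [jac_pr dk dg] at h1
  contrapose! h1
  linear_combination -h1

lemma add_ge {g h k : Cn 2 → ℂ} {R : ℝ} (hg : AnalyticOnNhd ℂ g (closedBall 0 R))
    (hh : AnalyticOnNhd ℂ h (closedBall 0 R)) (hk : AnalyticOnNhd ℂ k (closedBall 0 R))
    (hs : ∀ x ∈ sphere (0 : Cn 2) R, pr (fun x => g x * h x) k x ≠ 0) {m m1 m2 : ℕ}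
    (hm1 : IsDeg (pr g k) R m1) (hm2 : IsDeg (pr h k) R m2)
    (hm : IsDeg (pr (fun x => g x * h x) k) R m) : m1 + m2 ≤ m := by
  let H : ℂ × ℂ × ℂ → Cn 2 → Cn 2 := fun t =>
    pr (fun x => (g x - t.1) * (h x - t.2.1)) (fun x => k x - t.2.2)
  have H0 : H 0 = pr (fun x => g x * h x) k := by simp [H]
  have hHa : ∀ t, ∀ x ∈ closedBall (0 : Cn 2) R,
      AnalyticAt ℂ (fun p : (ℂ × ℂ × ℂ) × Cn 2 => H p.1 p.2) (t, x) := by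
    intro t x hx
    have sn : AnalyticAt ℂ (fun p : (ℂ × ℂ × ℂ) × Cn 2 => p.2) (t, x) := analyticAt_snd
    have a1 := (hg x hx).comp_of_eq sn rfl
    have a2 := (hh x hx).comp_of_eq sn rfl
    have a3 := (hk x hx).comp_of_eq sn rfl
    have b1 : AnalyticAt ℂ (fun p : (ℂ × ℂ × ℂ) × Cn 2 => p.1.1) (t, x) :=
      ((ContinuousLinearMap.fst ℂ ℂ (ℂ × ℂ)).comp (ContinuousLinearMap.fst ℂ (ℂ × ℂ × ℂ) (Cn 2))).analyticAt _
    have b2 : AnalyticAt ℂ (fun p : (ℂ × ℂ × ℂ) × Cn 2 => p.1.2.1) (t, x) :=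
      (((ContinuousLinearMap.fst ℂ ℂ ℂ).comp (ContinuousLinearMap.snd ℂ ℂ (ℂ × ℂ))).comp
        (ContinuousLinearMap.fst ℂ (ℂ × ℂ × ℂ) (Cn 2))).analyticAt _
    have b3 : AnalyticAt ℂ (fun p : (ℂ × ℂ × ℂ) × Cn 2 => p.1.2.2) (t, x) :=
      (((ContinuousLinearMap.snd ℂ ℂ ℂ).comp (ContinuousLinearMap.snd ℂ ℂ (ℂ × ℂ))).comp
        (ContinuousLinearMap.fst ℂ (ℂ × ℂ × ℂ) (Cn 2))).analyticAt _
    apply AnalyticAt.pi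
    intro i
    fin_cases i
    · exact (a1.sub b1).mul (a2.sub b2)
    · exact a3.sub b3
  have hE := fam_deg (H := H) (t₀ := 0) hHa (by rwa [H0]) (by rwa [H0])
  obtain ⟨η₁, hη₁, hE⟩ := Metric.eventually_nhds_iff_ball.1 hE
  obtain ⟨η₂, hη₂, hD⟩ := Metric.eventually_nhds_iff_ball.1 (hm1.and hm2)
  obtain ⟨η, hη, hη1, hη2⟩ : ∃ η > 0, η ≤ η₁ ∧ η ≤ η₂ :=
    ⟨min η₁ η₂, lt_min hη₁ hη₂, min_le_left _ _, min_le_right _ _⟩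
  replace hE : ∀ a b c : ℂ, ‖a‖ < η → ‖b‖ < η → ‖c‖ < η → IsDeg (H (a, b, c)) R m ∧
      ∀ x ∈ sphere (0 : Cn 2) R, H (a, b, c) x ≠ 0 := fun a b c ha hb hc => hE _ (by
    rw [mem_ball_zero_iff]
    exact (max_lt ha (max_lt hb hc)).trans_le hη1)
  have hD' : ∀ a c : ℂ, ‖a‖ < η → ‖c‖ < η → (![a, c] : Cn 2) ∈ ball 0 η₂ := fun a c ha hc => by
    rw [mem_ball_zero_iff, pi_norm_lt_iff hη₂]
    intro i; fin_cases i
    · exact ha.trans_le hη2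
    · exact hc.trans_le hη2
  have gk : AnalyticOnNhd ℂ (pr g k) (closedBall 0 R) := fun x hx => pr_analyticAt (hg x hx) (hk x hx)
  have hhk : AnalyticOnNhd ℂ (pr h k) (closedBall 0 R) := fun x hx => pr_analyticAt (hh x hx) (hk x hx)
  have s1 : ∀ a c : ℂ, ‖a‖ < η → ‖c‖ < η → ∀ x ∈ sphere (0 : Cn 2) R, pr g k x ≠ ![a, c] := by
    intro a c ha hc x hx he
    refine (hE a 0 c ha (by simpa using hη) hc).2 x hx ?_
    rw [pr_eq_iff] at he
    simp at he
    simp only [H]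
    rw [pr_eq_iff]
    simp [he]
  have s2 : ∀ a c : ℂ, ‖a‖ < η → ‖c‖ < η → ∀ x ∈ sphere (0 : Cn 2) R, pr h k x ≠ ![a, c] := by
    intro a c ha hc x hx he
    refine (hE 0 a c (by simpa using hη) ha hc).2 x hx ?_
    rw [pr_eq_iff] at he
    simp at he
    simp only [H]
    rw [pr_eq_iff]
    simp [he]
  have vec : ∀ q : Cn 2, (![q 0, q 1] : Cn 2) = q := by
    intro q; ext i; fin_cases i <;> rfl
  -- first choice
  obtain ⟨q1, hq1, hr1⟩ := sard gk (ball_mem_nhds (0 : Cn 2) hη)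
  have hq1' := (pi_norm_lt_iff hη).1 (mem_ball_zero_iff.1 hq1)
  have o1 := reg_open gk (q₀ := q1) (by rw [← vec q1]; exact s1 _ _ (hq1' 0) (hq1' 1)) hr1
  have o2 : ∀ᶠ q in 𝓝 (![0, q1 1] : Cn 2), IsRegularValueOn (pr g k) (ball 0 R) ![q1 0, q 1] := by
    have hc : Continuous (fun q : Cn 2 => (![q1 0, q 1] : Cn 2)) := by fun_prop
    have := hc.tendsto ![0, q1 1]
    have e : (![q1 0, (![0, q1 1] : Cn 2) 1] : Cn 2) = q1 := by simpa using vec q1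
    rw [e] at this
    exact this.eventually o1
  have o3 : (![0, q1 1] : Cn 2) ∈ ball (0 : Cn 2) η := by
    rw [mem_ball_zero_iff, pi_norm_lt_iff hη]
    intro i; fin_cases i
    · simpa using hη
    · exact hq1' 1
  obtain ⟨q2, ⟨hq2r, hq2⟩, hr2⟩ := sard hhk (inter_mem o2 (isOpen_ball.mem_nhds o3))
  have hq2' := (pi_norm_lt_iff hη).1 (mem_ball_zero_iff.1 hq2)
  set a := q1 0 with ha
  set c := q2 1 with hc
  have hr1' : IsRegularValueOn (pr g k) (ball 0 R) ![a, c] := hq2r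
  have f1 : (Sol (pr g k) R ![a, c]).Finite := sol_finite gk (s1 _ _ (hq1' 0) (hq2' 1)) hr1'
  have o4 := reg_open hhk (q₀ := q2) (by rw [← vec q2]; exact s2 _ _ (hq2' 0) (hq2' 1)) hr2
  have o5 : ∀ᶠ b in 𝓝 (q2 0), IsRegularValueOn (pr h k) (ball 0 R) ![b, c] := by
    have hc : Continuous (fun b : ℂ => (![b, c] : Cn 2)) := by fun_prop
    have := hc.tendsto (q2 0)
    rw [vec q2] at this
    exact this.eventually o4
  have o6 : ∀ᶠ b in 𝓝 (q2 0), ‖b‖ < η :=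
    continuous_norm.continuousAt.eventually (gt_mem_nhds (hq2' 0))
  have o7 : ∀ᶠ b in 𝓝[≠] (q2 0), b ∉ h '' Sol (pr g k) R ![a, c] := by
    have : ((h '' Sol (pr g k) R ![a, c]) \ {q2 0})ᶜ ∈ 𝓝 (q2 0) :=
      ((f1.image h).subset sdiff_subset).isClosed.isOpen_compl.mem_nhds (by simp)
    filter_upwards [mem_nhdsWithin_of_mem_nhds this, self_mem_nhdsWithin] with b hb hb' hb''
    exact hb ⟨hb'', hb'⟩
  obtain ⟨b, ⟨hb1, hb2⟩, hb3⟩ := (((o5.and o6).filter_mono nhdsWithin_le_nhds).and o7).exists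
  have f2 : (Sol (pr h k) R ![b, c]).Finite := sol_finite hhk (s2 _ _ hb2 (hq2' 1)) hb1
  have c1 := (hD _ (hD' a c (hq1' 0) (hq2' 1))).1 hr1'
  have c2 := (hD _ (hD' b c hb2 (hq2' 1))).2 hb1
  have hdis : Disjoint (Sol (pr g k) R ![a, c]) (Sol (pr h k) R ![b, c]) := by
    rw [Set.disjoint_left]
    intro x hx1 hx2
    exact hb3 ⟨x, hx1, (pr_eq_iff.1 hx2.2).1⟩
  rw [← c1, ← c2, ← Set.ncard_union_eq hdis f1 f2, Set.ncard_eq_toFinset_card _ (f1.union f2)]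
  obtain ⟨hdeg, hsph⟩ := hE a b c (hq1' 0) hb2 (hq2' 1)
  refine lower_semi (fun x hx => fam_slice (hHa _ x hx)) hsph hdeg _ ?_
  intro x hx
  rw [Set.Finite.mem_toFinset] at hx
  have hxb : x ∈ ball (0 : Cn 2) R := by rcases hx with hx | hx <;> exact hx.1
  have dg := (hg x (ball_subset_closedBall hxb)).differentiableAt.hasFDerivAt
  have dh := (hh x (ball_subset_closedBall hxb)).differentiableAt.hasFDerivAt
  have dk := (hk x (ball_subset_closedBall hxb)).differentiableAt.hasFDerivAt
  have hj := jac_pr ((dg.sub_const a).mul (dh.sub_const b)) (dk.sub_const c)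
  have hj1 := jac_pr dg dk
  have hj2 := jac_pr dh dk
  refine ⟨hxb, ?_, ?_⟩
  · simp only [H]
    rw [pr_eq_iff]
    rcases hx with hx | hx
    · have := pr_eq_iff.1 hx.2
      simp at this
      simp [this]
    · have := pr_eq_iff.1 hx.2
      simp at this
      simp [this]
  · simp only [H]
    have hj' : jac (pr (fun x => (g x - a) * (h x - b)) (fun x => k x - c)) x =
      (g x - a) * jac (pr h k) x + (h x - b) * jac (pr g k) x := by
      rw [hj1, hj2]
      refine hj.trans ?_
      simp only [add_apply, smul_apply, smul_eq_mul]
      ring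
    rw [hj']
    rcases hx with hx | hx
    · have e := pr_eq_iff.1 hx.2
      simp at e
      have n1 : h x - b ≠ 0 := fun h0 => hb3 ⟨x, hx, sub_eq_zero.1 h0⟩
      have n2 := (bij_iff_jac _ x).1 (hr1' x hx.1 hx.2)
      simp [e.1, n1, n2]
    · have e := pr_eq_iff.1 hx.2
      simp at e
      have n1 : g x - a ≠ 0 := fun h0 =>
        hb3 ⟨x, ⟨hx.1, pr_eq_iff.2 (by simp [e.2, sub_eq_zero.1 h0])⟩, e.1⟩
      have n2 := (bij_iff_jac _ x).1 (hb1 x hx.1 hx.2)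
      simp [e.1, n1, n2]

lemma exact_ge {α β γ δ : Cn 2 → ℂ} {R : ℝ} (hR : 0 < R) {p s : ℕ} (hp : 0 < p) (hs0 : 0 < s)
    (hα : AnalyticOnNhd ℂ α (closedBall 0 R)) (hβ : AnalyticOnNhd ℂ β (closedBall 0 R))
    (hγ : AnalyticOnNhd ℂ γ (closedBall 0 R)) (hδ : AnalyticOnNhd ℂ δ (closedBall 0 R))
    (hs : ∀ x ∈ sphere (0 : Cn 2) R, pr (fun x => x 0 ^ p * α x + x 1 ^ s * β x)
      (fun x => x 0 ^ p * γ x + x 1 ^ s * δ x) x ≠ 0) {m : ℕ}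
    (hm : IsDeg (pr (fun x => x 0 ^ p * α x + x 1 ^ s * β x)
      (fun x => x 0 ^ p * γ x + x 1 ^ s * δ x)) R m) : p * s ≤ m := by
  let H : ℂ × ℂ → Cn 2 → Cn 2 := fun t =>
    pr (fun x => (x 0 ^ p - t.2) * (α x + t.1) + (x 1 ^ s - t.2) * β x)
      (fun x => (x 0 ^ p - t.2) * γ x + (x 1 ^ s - t.2) * (δ x + t.1))
  have H0 : H 0 = pr (fun x => x 0 ^ p * α x + x 1 ^ s * β x)
      (fun x => x 0 ^ p * γ x + x 1 ^ s * δ x) := by simp [H]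
  have hHa : ∀ t, ∀ x ∈ closedBall (0 : Cn 2) R,
      AnalyticAt ℂ (fun p : (ℂ × ℂ) × Cn 2 => H p.1 p.2) (t, x) := by
    intro t x hx
    have sn : AnalyticAt ℂ (fun p : (ℂ × ℂ) × Cn 2 => p.2) (t, x) := analyticAt_snd
    have a1 := (hα x hx).comp_of_eq sn rfl
    have a2 := (hβ x hx).comp_of_eq sn rfl
    have a3 := (hγ x hx).comp_of_eq sn rfl
    have a4 := (hδ x hx).comp_of_eq sn rfl
    have b1 : AnalyticAt ℂ (fun p : (ℂ × ℂ) × Cn 2 => p.1.1) (t, x) :=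
      ((ContinuousLinearMap.fst ℂ ℂ ℂ).comp (ContinuousLinearMap.fst ℂ (ℂ × ℂ) (Cn 2))).analyticAt _
    have b2 : AnalyticAt ℂ (fun p : (ℂ × ℂ) × Cn 2 => p.1.2) (t, x) :=
      ((ContinuousLinearMap.snd ℂ ℂ ℂ).comp (ContinuousLinearMap.fst ℂ (ℂ × ℂ) (Cn 2))).analyticAt _
    have c : ∀ i, AnalyticAt ℂ (fun p : (ℂ × ℂ) × Cn 2 => p.2 i) (t, x) := fun i =>
      ((ContinuousLinearMap.proj (R := ℂ) (φ := fun _ : Fin 2 => ℂ) i).comp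
        (ContinuousLinearMap.snd ℂ (ℂ × ℂ) (Cn 2))).analyticAt _
    apply AnalyticAt.pi
    intro i
    fin_cases i
    · exact ((((c 0).pow p).sub b2).mul (a1.add b1)).add ((((c 1).pow s).sub b2).mul a2)
    · exact ((((c 0).pow p).sub b2).mul a3).add ((((c 1).pow s).sub b2).mul (a4.add b1))
  have hE := fam_deg (H := H) (t₀ := ((0 : ℂ), (0 : ℂ))) hHa
    (by rw [show ((0 : ℂ), (0 : ℂ)) = 0 from rfl, H0]; exact hs)
    (by rw [show ((0 : ℂ), (0 : ℂ)) = 0 from rfl, H0]; exact hm)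
  have hE' := hE.curry_nhds
  -- choose c
  have hdet : ∀ᶠ c in 𝓝[≠] (0 : ℂ), (α 0 + c) * (δ 0 + c) - β 0 * γ 0 ≠ 0 := by
    let q : Polynomial ℂ := (X + C (α 0)) * (X + C (δ 0)) - C (β 0 * γ 0)
    have hq : q ≠ 0 := by
      intro h0
      have h2 : q.coeff 2 = 1 := by
        have e : q = X ^ 2 + C (α 0 + δ 0) * X + C (α 0 * δ 0 - β 0 * γ 0) := by
          simp only [q, map_add, map_sub, map_mul]; ring
        rw [e]
        simp
      rw [h0] at h2
      simp at h2
    have hfin : {c | q.IsRoot c}.Finite := Polynomial.finite_setOfPred_isRoot hq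
    have : ({c | q.IsRoot c} \ {0})ᶜ ∈ 𝓝 (0 : ℂ) :=
      (hfin.subset sdiff_subset).isClosed.isOpen_compl.mem_nhds (by simp)
    filter_upwards [mem_nhdsWithin_of_mem_nhds this, self_mem_nhdsWithin] with c hc hc' h0
    refine hc ⟨?_, hc'⟩
    simp only [q, mem_ofPred_eq, IsRoot, eval_sub, eval_mul, eval_add, eval_X, eval_C]
    linear_combination h0
  obtain ⟨c, hcE, hcd⟩ := ((hE'.filter_mono nhdsWithin_le_nhds).and hdet).exists
  have h0R : (0 : Cn 2) ∈ closedBall (0 : Cn 2) R := mem_closedBall_self hR.le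
  have hcont : ContinuousAt (fun x => (α x + c) * (δ x + c) - β x * γ x) 0 :=
    ((((hα 0 h0R).continuousAt.add continuousAt_const).mul
      ((hδ 0 h0R).continuousAt.add continuousAt_const))).sub
      ((hβ 0 h0R).continuousAt.mul (hγ 0 h0R).continuousAt)
  obtain ⟨η, hη, hηd⟩ := Metric.eventually_nhds_iff_ball.1 (hcont.eventually_ne hcd)
  -- choose ζ
  have z1 : ∀ᶠ ζ in 𝓝 (0 : ℂ), IsDeg (H (c, ζ ^ (p * s))) R m ∧
      ∀ x ∈ sphere (0 : Cn 2) R, H (c, ζ ^ (p * s)) x ≠ 0 := by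
    have hc : Continuous (fun ζ : ℂ => ζ ^ (p * s)) := by fun_prop
    have := hc.tendsto 0
    rw [zero_pow (by positivity)] at this
    exact this.eventually hcE
  have z2 : ∀ᶠ ζ in 𝓝 (0 : ℂ), ‖ζ‖ < min 1 (min η R) := by
    filter_upwards [ball_mem_nhds (0 : ℂ) (lt_min one_pos (lt_min hη hR))] with ζ hζ
    exact mem_ball_zero_iff.1 hζ
  obtain ⟨ζ, ⟨⟨hζ1, hζs⟩, hζ2⟩, hζ0⟩ := (((z1.and z2).filter_mono nhdsWithin_le_nhds).and
    (self_mem_nhdsWithin : {0}ᶜ ∈ 𝓝[≠] (0 : ℂ))).exists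
  have hζ0' : ζ ≠ 0 := hζ0
  have hζa : ‖ζ‖ < 1 := hζ2.trans_le (min_le_left _ _)
  have hζb : ‖ζ‖ < η := hζ2.trans_le ((min_le_right _ _).trans (min_le_left _ _))
  have hζc : ‖ζ‖ < R := hζ2.trans_le ((min_le_right _ _).trans (min_le_right _ _))
  let T : Finset (ℂ × ℂ) := (nthRootsFinset p (1 : ℂ)) ×ˢ (nthRootsFinset s (1 : ℂ))
  let F : ℂ × ℂ → Cn 2 := fun w => ![ζ ^ s * w.1, ζ ^ p * w.2]
  have hTc : T.card = p * s := by
    rw [Finset.card_product, (Complex.isPrimitiveRoot_exp p hp.ne').card_nthRootsFinset,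
      (Complex.isPrimitiveRoot_exp s hs0.ne').card_nthRootsFinset]
  have hF : Function.Injective F := by
    intro w w' h
    have e0 := congrFun h 0
    have e1 := congrFun h 1
    simp [F, hζ0'] at e0 e1
    exact Prod.ext e0 e1
  rw [← hTc, ← Finset.card_image_of_injective T hF]
  refine lower_semi (fun x hx => fam_slice (hHa _ x hx)) hζs hζ1 _ ?_
  intro x hx
  obtain ⟨w, hw, rfl⟩ := Finset.mem_image.1 hx
  rw [Finset.mem_product, mem_nthRootsFinset hp, mem_nthRootsFinset hs0] at hw
  obtain ⟨w1, w2⟩ := hw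
  have n1 : ‖w.1‖ = 1 := Complex.norm_eq_one_of_pow_eq_one w1 hp.ne'
  have n2 : ‖w.2‖ = 1 := Complex.norm_eq_one_of_pow_eq_one w2 hs0.ne'
  have hsm : ∀ r, ‖ζ‖ < r → F w ∈ ball (0 : Cn 2) r := by
    intro r hr
    rw [mem_ball_zero_iff, pi_norm_lt_iff ((norm_nonneg _).trans_lt hr)]
    intro i
    fin_cases i
    · simp only [F, Fin.zero_eta, Matrix.cons_val_zero, norm_mul, norm_pow, n1, mul_one]
      exact (pow_le_of_le_one (norm_nonneg _) hζa.le hs0.ne').trans_lt hr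
    · simp only [F, Fin.mk_one, Matrix.cons_val_one, Matrix.cons_val_fin_one, norm_mul, norm_pow, n2, mul_one]
      exact (pow_le_of_le_one (norm_nonneg _) hζa.le hp.ne').trans_lt hr
  have e0 : (F w) 0 ^ p - ζ ^ (p * s) = 0 := by
    simp only [F, Matrix.cons_val_zero, mul_pow, w1]; ring
  have e1 : (F w) 1 ^ s - ζ ^ (p * s) = 0 := by
    simp only [F, Matrix.cons_val_one, Matrix.cons_val_fin_one, mul_pow, w2]; ring
  have nz0 : (F w) 0 ≠ 0 := by
    have : w.1 ≠ 0 := by intro h; simp [h] at n1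
    simp [F, hζ0', this]
  have nz1 : (F w) 1 ≠ 0 := by
    have : w.2 ≠ 0 := by intro h; simp [h] at n2
    simp [F, hζ0', this]
  have hFR := hsm R hζc
  have hFη := hηd _ (hsm η hζb)
  set y := F w with hy
  refine ⟨hFR, ?_, ?_⟩
  · simp only [H]
    rw [pr_eq_iff]
    simp [e0, e1]
  · have hyc := ball_subset_closedBall hFR
    have dα := ((hα y hyc).differentiableAt.hasFDerivAt).add_const c
    have dβ := (hβ y hyc).differentiableAt.hasFDerivAt
    have dγ := (hγ y hyc).differentiableAt.hasFDerivAt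
    have dδ := ((hδ y hyc).differentiableAt.hasFDerivAt).add_const c
    have dx : ∀ i : Fin 2, HasFDerivAt (fun x : Cn 2 => x i)
      (ContinuousLinearMap.proj (R := ℂ) (φ := fun _ : Fin 2 => ℂ) i) y := fun i =>
      (ContinuousLinearMap.proj (R := ℂ) (φ := fun _ : Fin 2 => ℂ) i).hasFDerivAt
    have d0 := ((dx 0).pow p).sub_const (ζ ^ (p * s))
    have d1 := ((dx 1).pow s).sub_const (ζ ^ (p * s))
    have hj := jac_pr ((d0.mul dα).add (d1.mul dβ)) ((d0.mul dγ).add (d1.mul dδ))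
    have hj' : jac (H (c, ζ ^ (p * s))) y = (p * y 0 ^ (p - 1)) * (s * y 1 ^ (s - 1)) *
        ((α y + c) * (δ y + c) - β y * γ y) := by
      refine hj.trans ?_
      simp [e0, e1]
      ring
    rw [hj']
    have hp' : (p : ℂ) ≠ 0 := by exact_mod_cast hp.ne'
    have hs' : (s : ℂ) ≠ 0 := by exact_mod_cast hs0.ne'
    exact mul_ne_zero (mul_ne_zero (mul_ne_zero hp' (pow_ne_zero _ nz0))
      (mul_ne_zero hs' (pow_ne_zero _ nz1))) hFη

lemma coord_pow_analytic (i : Fin 2) (p : ℕ) (s : Set (Cn 2)) :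
    AnalyticOnNhd ℂ (fun x : Cn 2 => x i ^ p) s := fun x _ =>
  ((ContinuousLinearMap.proj (R := ℂ) (φ := fun _ : Fin 2 => ℂ) i).analyticAt x).pow p

lemma combine {r n₁ n₂ : ℕ} (hr : 0 < r) (hn₁ : 0 < n₁) (hn₂ : 0 < n₂) {v₁ v₂ w₁ w₂ : Cn 2 → ℂ}
    {R : ℝ} (hR : 0 < R)
    (hv₁ : AnalyticOnNhd ℂ v₁ (closedBall 0 R)) (hv₂ : AnalyticOnNhd ℂ v₂ (closedBall 0 R))
    (hw₁ : AnalyticOnNhd ℂ w₁ (closedBall 0 R)) (hw₂ : AnalyticOnNhd ℂ w₂ (closedBall 0 R))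
    (hs : ∀ x ∈ sphere (0 : Cn 2) R,
      pr (fun x => x 0 ^ n₁ * (x 0 ^ (r * n₁) * v₁ x + x 1 ^ n₂ * w₁ x))
        (fun x => x 1 ^ n₂ * (x 0 ^ n₁ * v₂ x + x 1 ^ (r * n₂) * w₂ x)) x ≠ 0) {m : ℕ}
    (hm : IsDeg (pr (fun x => x 0 ^ n₁ * (x 0 ^ (r * n₁) * v₁ x + x 1 ^ n₂ * w₁ x))
        (fun x => x 1 ^ n₂ * (x 0 ^ n₁ * v₂ x + x 1 ^ (r * n₂) * w₂ x))) R m) :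
    2 * n₁ * n₂ + 2 * r * n₁ * n₂ ≤ m := by
  set B := closedBall (0 : Cn 2) R with hB
  set u : Cn 2 → ℂ := fun x => x 0 ^ n₁ with hu
  set v : Cn 2 → ℂ := fun x => x 1 ^ n₂ with hv
  set g₁ : Cn 2 → ℂ := fun x => x 0 ^ (r * n₁) * v₁ x + x 1 ^ n₂ * w₁ x with hg₁
  set g₂ : Cn 2 → ℂ := fun x => x 0 ^ n₁ * v₂ x + x 1 ^ (r * n₂) * w₂ x with hg₂
  have au : AnalyticOnNhd ℂ u B := coord_pow_analytic _ _ _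
  have av : AnalyticOnNhd ℂ v B := coord_pow_analytic _ _ _
  have ag₁ : AnalyticOnNhd ℂ g₁ B :=
    ((coord_pow_analytic _ _ _).mul hv₁).add ((coord_pow_analytic _ _ _).mul hw₁)
  have ag₂ : AnalyticOnNhd ℂ g₂ B :=
    ((coord_pow_analytic _ _ _).mul hv₂).add ((coord_pow_analytic _ _ _).mul hw₂)
  have avg : AnalyticOnNhd ℂ (fun x => v x * g₂ x) B := av.mul ag₂
  have hpa : ∀ {g k : Cn 2 → ℂ}, AnalyticOnNhd ℂ g B → AnalyticOnNhd ℂ k B →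
      AnalyticOnNhd ℂ (pr g k) B := fun hg hk x hx => pr_analyticAt (hg x hx) (hk x hx)
  have hs' : ∀ x ∈ sphere (0 : Cn 2) R, ¬ (u x * g₁ x = 0 ∧ v x * g₂ x = 0) := fun x hx h0 =>
    hs x hx (pr_eq_iff.2 h0)
  have nz : ∀ {g k : Cn 2 → ℂ}, (∀ x, g x = 0 → u x * g₁ x = 0) → (∀ x, k x = 0 → v x * g₂ x = 0) →
      ∀ x ∈ sphere (0 : Cn 2) R, pr g k x ≠ 0 := fun h1 h2 x hx h0 =>
    hs' x hx ⟨h1 x (pr_eq_iff.1 h0).1, h2 x (pr_eq_iff.1 h0).2⟩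
  have i1 : ∀ x, u x = 0 → u x * g₁ x = 0 := fun x h => by rw [h, zero_mul]
  have i2 : ∀ x, g₁ x = 0 → u x * g₁ x = 0 := fun x h => by rw [h, mul_zero]
  have i3 : ∀ x, v x = 0 → v x * g₂ x = 0 := fun x h => by rw [h, zero_mul]
  have i4 : ∀ x, g₂ x = 0 → v x * g₂ x = 0 := fun x h => by rw [h, mul_zero]
  have i5 : ∀ x, v x * g₂ x = 0 → v x * g₂ x = 0 := fun x h => h
  have huv := nz i1 i3
  have hug := nz i1 i4
  have hgv := nz i2 i3
  have hgg := nz i2 i4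
  have huvg := nz i1 i5
  have hgvg := nz i2 i5
  obtain ⟨a, ha⟩ := exists_deg (hpa au avg) huvg
  obtain ⟨b, hb⟩ := exists_deg (hpa ag₁ avg) hgvg
  obtain ⟨m1, hm1⟩ := exists_deg (hpa au av) huv
  obtain ⟨m2, hm2⟩ := exists_deg (hpa au ag₂) hug
  obtain ⟨m3, hm3⟩ := exists_deg (hpa ag₁ av) hgv
  obtain ⟨m4, hm4⟩ := exists_deg (hpa ag₁ ag₂) hgg
  have t0 : a + b ≤ m := add_ge au ag₁ avg hs ha hb hm
  have sw : ∀ {g : Cn 2 → ℂ}, (∀ x ∈ sphere (0 : Cn 2) R, pr g (fun x => v x * g₂ x) x ≠ 0) →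
      ∀ x ∈ sphere (0 : Cn 2) R, pr (fun x => v x * g₂ x) g x ≠ 0 := fun h x hx h0 =>
    h x hx (pr_eq_iff.2 (pr_eq_iff.1 h0).symm)
  have t1 : m1 + m2 ≤ a := add_ge av ag₂ au (sw huvg) (isDeg_swap au av hm1) (isDeg_swap au ag₂ hm2)
    (isDeg_swap au avg ha)
  have t2 : m3 + m4 ≤ b := add_ge av ag₂ ag₁ (sw hgvg) (isDeg_swap ag₁ av hm3)
    (isDeg_swap ag₁ ag₂ hm4) (isDeg_swap ag₁ avg hb)
  have c0 : AnalyticOnNhd ℂ (fun _ : Cn 2 => (0 : ℂ)) B := analyticOnNhd_const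
  have c1 : AnalyticOnNhd ℂ (fun _ : Cn 2 => (1 : ℂ)) B := analyticOnNhd_const
  have rp : ∀ n (z : ℂ), z ^ (r * n) = z ^ n * z ^ ((r - 1) * n) := fun n z => by
    rw [← pow_add]; congr 1
    obtain ⟨k, rfl⟩ : ∃ k, r = k + 1 := ⟨r - 1, by omega⟩
    simp; ring
  -- (u, v)
  have k1 : n₁ * n₂ ≤ m1 := by
    have e1 : u = fun x => x 0 ^ n₁ * (fun _ => (1 : ℂ)) x + x 1 ^ n₂ * (fun _ => (0 : ℂ)) x := by
      ext x; simp [hu]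
    have e2 : v = fun x => x 0 ^ n₁ * (fun _ => (0 : ℂ)) x + x 1 ^ n₂ * (fun _ => (1 : ℂ)) x := by
      ext x; simp [hv]
    rw [e1, e2] at hm1 huv
    exact exact_ge hR hn₁ hn₂ c1 c0 c0 c1 huv hm1
  have k2 : n₁ * (r * n₂) ≤ m2 := by
    have e1 : u = fun x => x 0 ^ n₁ * (fun _ => (1 : ℂ)) x + x 1 ^ (r * n₂) * (fun _ => (0 : ℂ)) x := by
      ext x; simp [hu]
    rw [e1, hg₂] at hm2 hug
    exact exact_ge hR hn₁ (Nat.mul_pos hr hn₂) c1 c0 hv₂ hw₂ hug hm2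
  have k3 : (r * n₁) * n₂ ≤ m3 := by
    have e2 : v = fun x => x 0 ^ (r * n₁) * (fun _ => (0 : ℂ)) x + x 1 ^ n₂ * (fun _ => (1 : ℂ)) x := by
      ext x; simp [hv]
    rw [e2, hg₁] at hm3 hgv
    exact exact_ge hR (Nat.mul_pos hr hn₁) hn₂ hv₁ hw₁ c0 c1 hgv hm3
  have k4 : n₁ * n₂ ≤ m4 := by
    have e1 : g₁ = fun x => x 0 ^ n₁ * (fun x : Cn 2 => x 0 ^ ((r - 1) * n₁) * v₁ x) x + x 1 ^ n₂ * w₁ x := by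
      ext x; simp only [hg₁, rp]; ring
    have e2 : g₂ = fun x => x 0 ^ n₁ * v₂ x + x 1 ^ n₂ * (fun x : Cn 2 => x 1 ^ ((r - 1) * n₂) * w₂ x) x := by
      ext x; simp only [hg₂, rp]; ring
    rw [e1, e2] at hm4 hgg
    exact exact_ge hR hn₁ hn₂ ((coord_pow_analytic _ _ _).mul hv₁) hw₁ hv₂
      ((coord_pow_analytic _ _ _).mul hw₂) hgg hm4
  nlinarith

/-- Cronin-type estimate: if `f₁ = x₁^{n₁}[x₁^{r n₁}·O(1) + x₂^{n₂}·O(1)]` and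
`f₂ = x₂^{n₂}[x₁^{n₁}·O(1) + x₂^{r n₂}·O(1)]`, and `0` is an isolated zero of `f`,
then `π_f(0) ≥ 2 n₁ n₂ + 2 r n₁ n₂`. -/
theorem zeroOrder_corollary_five (r n₁ n₂ : ℕ) (hr : 0 < r) (hn₁ : 0 < n₁)
    (hn₂ : 0 < n₂) (f : Cn 2 → Cn 2) (v₁ v₂ w₁ w₂ : Cn 2 → ℂ)
    (hv₁ : AnalyticAt ℂ v₁ 0) (hv₂ : AnalyticAt ℂ v₂ 0)
    (hw₁ : AnalyticAt ℂ w₁ 0) (hw₂ : AnalyticAt ℂ w₂ 0)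
    (hform : ∀ᶠ x in 𝓝 (0 : Cn 2),
      f x = ![x 0 ^ n₁ * (x 0 ^ (r * n₁) * v₁ x + x 1 ^ n₂ * w₁ x),
              x 1 ^ n₂ * (x 0 ^ n₁ * v₂ x + x 1 ^ (r * n₂) * w₂ x)])
    (hiso : IsolatedZeroAt0 f) :
    2 * n₁ * n₂ + 2 * r * n₁ * n₂ ≤ zeroOrder f 0 := by
  set F : Cn 2 → Cn 2 := pr (fun x => x 0 ^ n₁ * (x 0 ^ (r * n₁) * v₁ x + x 1 ^ n₂ * w₁ x))
    (fun x => x 1 ^ n₂ * (x 0 ^ n₁ * v₂ x + x 1 ^ (r * n₂) * w₂ x)) with hF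
  have hz : ∀ᶠ x in 𝓝 (0 : Cn 2), f x = 0 → x = 0 := by
    filter_upwards [eventually_nhdsWithin_iff.1 hiso.2] with x hx h0
    by_contra hne
    exact hx hne h0
  obtain ⟨R₀, hR₀, hloc⟩ := Metric.eventually_nhds_iff_ball.1
    (((hv₁.eventually_analyticAt.and hv₂.eventually_analyticAt).and
      (hw₁.eventually_analyticAt.and hw₂.eventually_analyticAt)).and
      ((eventually_eventually_nhds.2 hform).and hz))
  have hsub : ∀ {R : ℝ}, R < R₀ → closedBall (0 : Cn 2) R ⊆ ball 0 R₀ := fun h =>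
    closedBall_subset_ball h
  have hfF : ∀ x ∈ ball (0 : Cn 2) R₀, f =ᶠ[𝓝 x] F := fun x hx => (hloc x hx).2.1
  have hFa : AnalyticOnNhd ℂ F (ball 0 R₀) := by
    intro x hx
    have c := fun i p => coord_pow_analytic i p (ball (0 : Cn 2) R₀) x hx
    obtain ⟨⟨⟨a1, a2⟩, a3, a4⟩, -⟩ := hloc x hx
    exact pr_analyticAt ((c 0 n₁).mul (((c 0 (r * n₁)).mul a1).add ((c 1 n₂).mul a3)))
      ((c 1 n₂).mul (((c 0 n₁).mul a2).add ((c 1 (r * n₂)).mul a4)))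
  have hfa : AnalyticOnNhd ℂ f (ball 0 R₀) := fun x hx => (hFa x hx).congr (hfF x hx).symm
  have hne : {m | HasZeroOrder f 0 m}.Nonempty := by
    have hlt : R₀ / 2 < R₀ := by linarith
    have hfa' : AnalyticOnNhd ℂ f (closedBall 0 (R₀ / 2)) := hfa.mono (hsub hlt)
    obtain ⟨m, hm⟩ := exists_deg hfa' (fun x hx h0 => by
      have := (hloc x (hsub hlt (sphere_subset_closedBall hx))).2.2 h0
      rw [mem_sphere, this, dist_self] at hx
      linarith)
    refine ⟨m, R₀ / 2, by linarith, hfa', hiso.1, fun x hx => (hloc x (hsub hlt hx)).2.2, ?_, ?_⟩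
    · intro ε hε
      obtain ⟨q, hq, hreg⟩ := sard hfa' (ball_mem_nhds (0 : Cn 2) hε)
      exact ⟨q, mem_ball_zero_iff.1 hq, hreg⟩
    · obtain ⟨δ, hδ, hd⟩ := Metric.eventually_nhds_iff_ball.1 hm
      exact ⟨δ, hδ, fun q hq => hd q (mem_ball_zero_iff.2 hq)⟩
  obtain ⟨r₀, hr₀, hfa₀, -, hz₀, -, δ, hδ, hcount⟩ := Nat.sInf_mem hne
  change 2 * n₁ * n₂ + 2 * r * n₁ * n₂ ≤ sInf {m | HasZeroOrder f 0 m}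
  set m := sInf {m | HasZeroOrder f 0 m} with hmdef
  obtain ⟨R, hR, hRR, hRr⟩ : ∃ R > 0, R < R₀ ∧ R < r₀ :=
    ⟨min R₀ r₀ / 2, by have := lt_min hR₀ hr₀; linarith,
      by have := lt_min hR₀ hr₀; have := min_le_left R₀ r₀; linarith,
      by have := lt_min hR₀ hr₀; have := min_le_right R₀ r₀; linarith⟩
  have hK : IsCompact (closedBall (0 : Cn 2) r₀ \ ball 0 R) :=
    (isCompact_closedBall _ _).diff isOpen_ball
  obtain ⟨c, hc, hc'⟩ := hK.exists_forall_le' (f := fun x => ‖f x‖) (a := 0)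
    ((hfa₀.continuousOn.mono sdiff_subset).norm) (fun x hx => norm_pos_iff.2 fun h0 => by
      have := hz₀ x hx.1 h0
      exact hx.2 (this ▸ mem_ball_self hR))
  have hdegF : IsDeg F R m := by
    filter_upwards [ball_mem_nhds (0 : Cn 2) (lt_min hc hδ)] with q hq hreg
    rw [mem_ball_zero_iff, lt_min_iff] at hq
    have hin : ∀ x ∈ ball (0 : Cn 2) r₀, f x = q → x ∈ ball (0 : Cn 2) R := by
      intro x hx hxq
      by_contra hn
      have := hc' x ⟨ball_subset_closedBall hx, hn⟩
      rw [hxq] at this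
      linarith [hq.1]
    have heq : {x ∈ ball (0 : Cn 2) r₀ | f x = q} = Sol F R q := by
      ext x
      constructor
      · rintro ⟨h1, h2⟩
        have h3 := hin x h1 h2
        exact ⟨h3, by rw [← (hfF x (hsub hRR (ball_subset_closedBall h3))).eq_of_nhds]; exact h2⟩
      · rintro ⟨h1, h2⟩
        exact ⟨ball_subset_ball hRr.le h1, by
          rw [(hfF x (hsub hRR (ball_subset_closedBall h1))).eq_of_nhds]; exact h2⟩
    rw [← heq]
    refine hcount q hq.2 fun x hx hxq => ?_
    have h3 := hin x hx hxq
    have h4 := hfF x (hsub hRR (ball_subset_closedBall h3))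
    rw [h4.fderiv_eq]
    exact hreg x h3 (by rw [← h4.eq_of_nhds]; exact hxq)
  refine combine hr hn₁ hn₂ hR (fun x hx => (hloc x (hsub hRR hx)).1.1.1)
    (fun x hx => (hloc x (hsub hRR hx)).1.1.2) (fun x hx => (hloc x (hsub hRR hx)).1.2.1)
    (fun x hx => (hloc x (hsub hRR hx)).1.2.2) (fun x hx h0 => ?_) hdegF
  have hxB := hsub hRR (sphere_subset_closedBall hx)
  have := (hloc x hxB).2.2 (by rw [(hfF x hxB).eq_of_nhds]; exact h0)
  rw [mem_sphere, this, dist_self] at hx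
  linarith

end ZhangPaper
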